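/- arXiv:2309.02890 — 7 statements merged into one kernel-verified Lean document; each statement's English description precedes it below -/
import Mathlib

section
/- For every natural number n, in the group algebra ℂ[ℚ^{3(n+1)}] (i.e. AddMonoidAlgebra ℂ (Fin (3*(n+1)) →₀ ℚ), whose canonical basis monomials correspond to finitely supported functions Fin (3(n+1)) → ℚ), the ideal generated by the n+1 elements z_{3i} + z_{3i+1} + z_{3i+2} for i = 0, …, n — where z_j denotes the basis monomial corresponding to the finitely supported function sending j to 1 and everything else to 0 — is a prime ideal. -/
/-!
Over the ring of polynomials in all variables but the first two of each block, the generators have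
the form `u + v + c` with `c` a nonzero constant. Adjoin the pairs `u, v` one at a time, each time
passing to the quotient by `u + v + c`. The quotient stays a domain of characteristic zero
containing the constants: a multiple of `u + v + c` has at least two terms, since `ℚ²` has the
two-unique-sums property, so it is not a nonzero constant.

It remains to see that `u + v + c` is prime in `R[ℚ²]`. That ring is the union of the Laurent
polynomial rings `R[u^(±1/m), v^(±1/m)]`, so after renaming the roots the claim is that
`u ^ m + v ^ m + c` is prime in `R[u, v]`. Over the fraction field of `R`, the polynomial
`v ^ m + c` is squarefree in characteristic zero, and Eisenstein's criterion applies at any of its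
irreducible factors. An infinite family of generators is a directed union of finite ones.
-/

section FermatPolynomial

open Polynomial

theorem irreducible_X_pow_add_C_of_squarefree {A : Type*} [CommRing A] [IsDomain A]
    [UniqueFactorizationMonoid A] {a : A} (ha : Squarefree a) (ha' : ¬IsUnit a) {m : ℕ}
    (hm : 0 < m) : Irreducible (X ^ m + C a : A[X]) := by
  obtain ⟨π, hπ, hπa⟩ := WfDvdMonoid.exists_irreducible_factor ha' ha.ne_zero
  have monic : (X ^ m + C a : A[X]).Monic := monic_X_pow_add_C a hm.ne'
  have eisenstein : (X ^ m + C a : A[X]).IsEisensteinAt (Ideal.span {π}) := by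
    refine ⟨?_, fun {k} hk ↦ ?_, ?_⟩
    · rw [monic.leadingCoeff, Ideal.mem_span_singleton]
      exact fun h ↦ hπ.not_isUnit (isUnit_of_dvd_one h)
    · rw [natDegree_X_pow_add_C] at hk
      rw [Ideal.mem_span_singleton, coeff_add, coeff_X_pow, if_neg hk.ne, zero_add, coeff_C]
      split_ifs
      · exact hπa
      · exact dvd_zero π
    · rw [Ideal.span_singleton_pow, Ideal.mem_span_singleton, coeff_add, coeff_X_pow,
        if_neg hm.ne, zero_add, coeff_C_zero, sq]
      exact fun h ↦ hπ.not_isUnit (ha π h)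
  exact eisenstein.irreducible ((Ideal.span_singleton_prime hπ.ne_zero).2 hπ.prime)
    monic.isPrimitive (by rwa [natDegree_X_pow_add_C])

theorem prime_X_pow_add_C_X_pow_add_C {K : Type*} [Field K] [CharZero K] {m : ℕ} (hm : 0 < m)
    {c : K} (hc : c ≠ 0) : Prime (X ^ m + C (X ^ m + C c) : K[X][X]) := by
  refine (irreducible_X_pow_add_C_of_squarefree ?_ ?_ hm).prime
  · have separable : (X ^ m - C (-c) : K[X]).Separable :=
      separable_X_pow_sub_C (-c) (Nat.cast_ne_zero.2 hm.ne') (neg_ne_zero.2 hc)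
    simpa only [map_neg, sub_neg_eq_add] using separable.squarefree
  · exact not_isUnit_of_natDegree_pos _ (by rwa [natDegree_X_pow_add_C])

theorem prime_of_monic_of_prime_map {A B : Type*} [CommRing A] [CommRing B]
    {f : A →+* B} (hf : Function.Injective f) {p : A[X]} (hp : p.Monic)
    (h : Prime (p.map f)) : Prime p := by
  refine ⟨fun hp₀ ↦ h.ne_zero (by rw [hp₀, Polynomial.map_zero]),
    fun hu ↦ h.not_isUnit (hu.map (mapRingHom f)), fun a b hab ↦ ?_⟩
  rw [← map_dvd_map f hf hp, Polynomial.map_mul] at hab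
  exact (h.dvd_or_dvd hab).imp (map_dvd_map f hf hp).1 (map_dvd_map f hf hp).1

theorem prime_X_pow_add_X_pow_add_C {R : Type*} [CommRing R] [IsDomain R] [CharZero R]
    {m : ℕ} (hm : 0 < m) {c : R} (hc : c ≠ 0) :
    Prime (MvPolynomial.X 0 ^ m + MvPolynomial.X 1 ^ m + MvPolynomial.C c :
      MvPolynomial (Fin 2) R) := by
  let K := FractionRing R
  have hRK : Function.Injective (algebraMap R K) := IsFractionRing.injective R K
  have : CharZero K := charZero_of_injective_algebraMap hRK
  let f : MvPolynomial (Fin 1) R →+* K[X] :=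
    (mapRingHom (algebraMap R K)).comp (MvPolynomial.uniqueAlgEquiv R (Fin 1) : _ →+* _)
  have hf : Function.Injective f := fun p q hpq ↦
    (MvPolynomial.uniqueAlgEquiv R (Fin 1)).injective (map_injective _ hRK hpq)
  have hf_const : f (MvPolynomial.X 0 ^ m + MvPolynomial.C c) = X ^ m + C (algebraMap R K c) := by
    simp [f]
  have eq_univariate : MvPolynomial.finSuccEquiv R 1
      (MvPolynomial.X 0 ^ m + MvPolynomial.X 1 ^ m + MvPolynomial.C c) =
        X ^ m + C (MvPolynomial.X 0 ^ m + MvPolynomial.C c) := by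
    rw [← Fin.succ_zero_eq_one]
    simp only [map_add, map_pow, MvPolynomial.finSuccEquiv_X_zero,
      MvPolynomial.finSuccEquiv_X_succ, add_assoc]
    simp [MvPolynomial.finSuccEquiv_apply]
  have prime_univariate : Prime (X ^ m + C (MvPolynomial.X 0 ^ m + MvPolynomial.C c) :
      (MvPolynomial (Fin 1) R)[X]) := by
    refine prime_of_monic_of_prime_map hf (monic_X_pow_add_C _ hm.ne') ?_
    rw [Polynomial.map_add, Polynomial.map_pow, map_X, map_C, hf_const]
    exact prime_X_pow_add_C_X_pow_add_C hm ((map_ne_zero_iff _ hRK).2 hc)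
  rw [← eq_univariate] at prime_univariate
  exact (MulEquiv.prime_iff (MvPolynomial.finSuccEquiv R 1)).1 prime_univariate

end FermatPolynomial

section AddMonoidAlgebra

theorem nontrivial_support_mul {R G : Type*} [Semiring R] [NoZeroDivisors R] [Add G]
    [TwoUniqueSums G] {f g : AddMonoidAlgebra R G} (hf : f.coeff.support.Nontrivial)
    (hg : g ≠ 0) : (f * g).coeff.support.Nontrivial := by
  have hg' : 0 < g.coeff.support.card := by
    simpa [Finset.card_pos] using hg
  have hcard : 1 < f.coeff.support.card * g.coeff.support.card :=
    (Finset.one_lt_card_iff_nontrivial.2 hf).trans_le (Nat.le_mul_of_pos_right _ hg')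
  obtain ⟨p, hp, q, hq, hpq, unique_p, unique_q⟩ := TwoUniqueSums.uniqueAdd_of_one_lt_card hcard
  rw [Finset.mem_product] at hp hq
  have mem {a b : G} (ha : a ∈ f.coeff.support) (hb : b ∈ g.coeff.support)
      (hab : UniqueAdd f.coeff.support g.coeff.support a b) :
      a + b ∈ (f * g).coeff.support := by
    rw [Finsupp.mem_support_iff] at ha hb ⊢
    rw [AddMonoidAlgebra.coeff_mul_add_of_uniqueAdd hab]
    exact mul_ne_zero ha hb
  exact ⟨_, mem hp.1 hp.2 unique_p, _, mem hq.1 hq.2 unique_q,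
    fun h ↦ hpq (Prod.ext_iff.2 (unique_q hp.1 hp.2 h))⟩

theorem ker_addMonoidAlgebra_mapRingHom {R S G : Type*} [Ring R] [Ring S]
    [AddMonoid G] (f : R →+* S) : RingHom.ker (AddMonoidAlgebra.mapRingHom G f) =
      (RingHom.ker f).map (AddMonoidAlgebra.singleZeroRingHom : R →+* AddMonoidAlgebra R G) := by
  apply le_antisymm
  · intro p hp
    have hcoeff (v : G) : p.coeff v ∈ RingHom.ker f := by
      simpa using congrArg (fun q ↦ q.coeff v) ((RingHom.mem_ker).1 hp)
    rw [← AddMonoidAlgebra.sum_coeff_single p]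
    refine Ideal.sum_mem _ fun v _ ↦ ?_
    have hsingle : AddMonoidAlgebra.single v (p.coeff v) =
        AddMonoidAlgebra.single v 1 * AddMonoidAlgebra.singleZeroRingHom (p.coeff v) := by
      simp [AddMonoidAlgebra.single_mul_single]
    rw [hsingle]
    exact Ideal.mul_mem_left _ _ (Ideal.mem_map_of_mem _ (hcoeff v))
  · rw [Ideal.map_le_iff_le_comap]
    intro r hr
    simp [RingHom.mem_ker.1 hr]

end AddMonoidAlgebra

section PrimeSpan

theorem isPrime_span_image_equiv {A B : Type*} [CommRing A] [CommRing B] (e : A ≃+* B) {s : Set A}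
    (hs : (Ideal.span s).IsPrime) : (Ideal.span (e '' s)).IsPrime := by
  rw [← Ideal.map_span]
  exact Ideal.map_isPrime_of_equiv e

theorem isPrime_span_insert_of_ker_eq {A B : Type*} [CommRing A] [CommRing B] {φ : A →+* B}
    (hφ : Function.Surjective φ) {a : A} (hker : RingHom.ker φ = Ideal.span {a}) {s : Set A}
    (hs : (Ideal.span (φ '' s)).IsPrime) : (Ideal.span (insert a s)).IsPrime := by
  have eq_comap : Ideal.span (insert a s) = (Ideal.span (φ '' s)).comap φ := by
    rw [← Ideal.map_span, Ideal.comap_map_of_surjective' φ hφ, hker, Ideal.span_insert, sup_comm]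
  rw [eq_comap]
  exact hs.comap φ

theorem isPrime_span_insert_singleZeroRingHom {R G : Type*} [CommRing R] [AddCommMonoid G]
    {t : R} {s : Set (AddMonoidAlgebra R G)}
    (hs : (Ideal.span (AddMonoidAlgebra.mapRingHom G (Ideal.Quotient.mk (Ideal.span {t})) ''
      s)).IsPrime) :
    (Ideal.span (insert (AddMonoidAlgebra.singleZeroRingHom t) s)).IsPrime := by
  refine isPrime_span_insert_of_ker_eq ?_ ?_ hs
  · exact AddMonoidAlgebra.map_surjective (Ideal.Quotient.mk _).toAddMonoidHom
      Ideal.Quotient.mk_surjective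
  · rw [ker_addMonoidAlgebra_mapRingHom, Ideal.mk_ker, Ideal.map_span, Set.image_singleton]

theorem isPrime_span_range_of_fin {A ι : Type*} [CommRing A] {f : ι → A}
    (h : ∀ (n : ℕ) (g : Fin n ↪ ι), (Ideal.span (Set.range (f ∘ g))).IsPrime) :
    (Ideal.span (Set.range f)).IsPrime := by
  have exists_fin {a : A} (ha : a ∈ Ideal.span (Set.range f)) :
      ∃ (n : ℕ) (g : Fin n ↪ ι), a ∈ Ideal.span (Set.range (f ∘ g)) := by
    obtain ⟨c, rfl⟩ := Finsupp.mem_ideal_span_range_iff_exists_finsupp.1 ha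
    let g : Fin c.support.card ↪ ι :=
      c.support.equivFin.symm.toEmbedding.trans (Function.Embedding.subtype _)
    refine ⟨_, g, Ideal.sum_mem _ fun i hi ↦ Ideal.mul_mem_left _ _ (Ideal.subset_span ?_)⟩
    exact ⟨c.support.equivFin ⟨i, hi⟩, by simp [g]⟩
  have le (n : ℕ) (g : Fin n ↪ ι) :
      Ideal.span (Set.range (f ∘ g)) ≤ Ideal.span (Set.range f) :=
    Ideal.span_mono (Set.range_comp_subset_range g f)
  refine ⟨fun htop ↦ ?_, fun {a b} hab ↦ ?_⟩
  · obtain ⟨n, g, hg⟩ := exists_fin ((Ideal.eq_top_iff_one _).1 htop)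
    exact (h n g).ne_top ((Ideal.eq_top_iff_one _).2 hg)
  · obtain ⟨n, g, hg⟩ := exists_fin hab
    exact ((h n g).mem_or_mem hg).imp (fun ha ↦ le n g ha) (fun hb ↦ le n g hb)

end PrimeSpan

/-- The ring `R[ℚ^σ]` of polynomials with rational exponents in the variables `σ`. -/
abbrev RatExpPolynomial (σ R : Type*) [Semiring R] : Type _ :=
  AddMonoidAlgebra R (σ →₀ ℚ)

namespace RatExpPolynomial

section Basic

variable {σ τ υ R : Type*} [CommRing R]

/-- The embedding of constants, in the role of `MvPolynomial.C`. -/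
noncomputable def C : R →+* RatExpPolynomial σ R :=
  AddMonoidAlgebra.singleZeroRingHom

theorem C_apply (r : R) : (C r : RatExpPolynomial σ R) = AddMonoidAlgebra.single 0 r := rfl

theorem C_injective : Function.Injective (C : R →+* RatExpPolynomial σ R) :=
  AddMonoidAlgebra.single_right_injective

/-- The variable of index `i`, in the role of `MvPolynomial.X`. -/
noncomputable def X (i : σ) : RatExpPolynomial σ R :=
  AddMonoidAlgebra.single (Finsupp.single i 1) 1

/-- Polynomials in `σ` over polynomials in `τ` are polynomials in `υ ≃ σ ⊕ τ`; compare
`MvPolynomial.sumRingEquiv`. -/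
noncomputable def uncurry (e : σ ⊕ τ ≃ υ) :
    RatExpPolynomial σ (RatExpPolynomial τ R) ≃+* RatExpPolynomial υ R :=
  AddMonoidAlgebra.curryRingEquiv.symm.trans <| AddMonoidAlgebra.mapDomainRingEquiv R <|
    Finsupp.sumFinsuppAddEquivProdFinsupp.symm.trans (Finsupp.domCongr e)

theorem uncurry_X (e : σ ⊕ τ ≃ υ) (i : σ) :
    uncurry e (X i) = (X (e (.inl i)) : RatExpPolynomial υ R) := by
  have single_inl : (Finsupp.single i 1, 0) =
      Finsupp.sumFinsuppAddEquivProdFinsupp (Finsupp.single (Sum.inl i : σ ⊕ τ) (1 : ℚ)) := by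
    ext <;> simp [Finsupp.sumFinsuppAddEquivProdFinsupp]
  simp only [uncurry, X, AddMonoidAlgebra.one_def, RingEquiv.trans_apply,
    AddMonoidAlgebra.curryRingEquiv_symm_single, AddMonoidAlgebra.mapDomainRingEquiv_single,
    single_inl]
  simp

theorem uncurry_C_X (e : σ ⊕ τ ≃ υ) (i : τ) :
    uncurry e (C (X i)) = (X (e (.inr i)) : RatExpPolynomial υ R) := by
  simp only [uncurry, X, C_apply, RingEquiv.trans_apply]
  simp

theorem uncurry_C_C (e : σ ⊕ τ ≃ υ) (r : R) :
    uncurry e (C (C r)) = (C r : RatExpPolynomial υ R) := by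
  simp [uncurry, C_apply]

theorem map_X {S : Type*} [CommRing S] (f : R →+* S) (i : σ) :
    AddMonoidAlgebra.mapRingHom (σ →₀ ℚ) f (X i) = X i := by
  simp [X]

end Basic

section Root

variable {σ R : Type*} [CommRing R]

/-- Division of exponents by `m`, as a map `ℕ^σ → ℚ^σ`. -/
noncomputable def divExponent (m : ℕ) : (σ →₀ ℕ) →+ (σ →₀ ℚ) :=
  Finsupp.mapRange.addMonoidHom
    ((AddMonoidHom.mulRight (m : ℚ)⁻¹).comp (Nat.castAddMonoidHom ℚ))

theorem divExponent_apply (m : ℕ) (v : σ →₀ ℕ) (i : σ) :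
    divExponent m v i = v i * (m : ℚ)⁻¹ := by
  simp [divExponent]

theorem divExponent_injective {m : ℕ} (hm : 0 < m) :
    Function.Injective (divExponent m : (σ →₀ ℕ) →+ (σ →₀ ℚ)) := by
  intro v w h
  ext i
  have hi := DFunLike.congr_fun h i
  rw [divExponent_apply, divExponent_apply] at hi
  exact_mod_cast mul_right_cancel₀ (by positivity) hi

theorem exists_forall_natCast_eq_add_mul (s : Finset ℚ) :
    ∃ m : ℕ, 0 < m ∧ ∃ N : ℕ, ∀ q ∈ s, ∃ k : ℕ, (k : ℚ) = N + m * q := by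
  classical
  induction s using Finset.induction_on with
  | empty => exact ⟨1, one_pos, 0, by simp⟩
  | insert q s _ ih =>
    obtain ⟨m, hm, N, h⟩ := ih
    refine ⟨m * q.den, by positivity, N * q.den + m * q.num.natAbs, fun r hr ↦ ?_⟩
    rcases Finset.mem_insert.1 hr with rfl | hr
    · obtain ⟨a, ha⟩ := Int.eq_ofNat_of_zero_le (a := r.num.natAbs + r.num) (by omega)
      refine ⟨N * r.den + m * a, ?_⟩
      have ha' : (a : ℚ) = r.num.natAbs + r.num := by
        simpa only [Int.cast_add, Int.cast_natCast] using congrArg (Int.cast : ℤ → ℚ) ha.symm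
      push_cast
      linear_combination (m : ℚ) * ha' - m * r.den_mul_eq_num
    · obtain ⟨k, hk⟩ := h r hr
      refine ⟨k * q.den + m * q.num.natAbs, ?_⟩
      push_cast
      linear_combination (q.den : ℚ) * hk

theorem exists_forall_divExponent_eq [Finite σ] (s : Finset (σ →₀ ℚ)) :
    ∃ m : ℕ, 0 < m ∧ ∃ w : σ →₀ ℕ, ∀ v ∈ s, ∃ u : σ →₀ ℕ,
      divExponent m u = divExponent m w + v := by
  classical
  have := Fintype.ofFinite σ
  obtain ⟨m, hm, N, h⟩ :=
    exists_forall_natCast_eq_add_mul (s.biUnion fun v ↦ Finset.univ.image v)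
  refine ⟨m, hm, Finsupp.equivFunOnFinite.symm fun _ ↦ N, fun v hv ↦ ?_⟩
  choose u hu using fun i ↦
    h (v i) (Finset.mem_biUnion.2 ⟨v, hv, Finset.mem_image_of_mem v (Finset.mem_univ i)⟩)
  refine ⟨Finsupp.equivFunOnFinite.symm u, Finsupp.ext fun i ↦ ?_⟩
  simp only [divExponent_apply, Finsupp.add_apply, Finsupp.equivFunOnFinite_symm_apply_apply, hu]
  field_simp

/-- The embedding of `MvPolynomial σ R` sending each variable to its `m`-th root; it relies on
`MvPolynomial σ R` being definitionally `AddMonoidAlgebra R (σ →₀ ℕ)`. -/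
noncomputable def rootHom (m : ℕ) : MvPolynomial σ R →+* RatExpPolynomial σ R :=
  AddMonoidAlgebra.mapDomainRingHom R (divExponent m)

theorem rootHom_monomial (m : ℕ) (v : σ →₀ ℕ) (r : R) :
    rootHom m (MvPolynomial.monomial v r) = AddMonoidAlgebra.single (divExponent m v) r :=
  AddMonoidAlgebra.mapDomain_single

theorem rootHom_C (m : ℕ) (r : R) : rootHom m (MvPolynomial.C r : MvPolynomial σ R) = C r := by
  rw [MvPolynomial.C_apply, rootHom_monomial, map_zero]
  rfl

theorem rootHom_X_pow {m : ℕ} (hm : 0 < m) (i : σ) :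
    rootHom m (MvPolynomial.X i ^ m : MvPolynomial σ R) = X i := by
  have : divExponent m (Finsupp.single i m) = Finsupp.single i 1 := by
    simp [divExponent, hm.ne']
  rw [MvPolynomial.X_pow_eq_monomial, rootHom_monomial, this, X]

theorem rootHom_injective {m : ℕ} (hm : 0 < m) :
    Function.Injective (rootHom m : MvPolynomial σ R →+* RatExpPolynomial σ R) :=
  AddMonoidAlgebra.mapDomain_injective (divExponent_injective hm)

theorem isUnit_rootHom_monomial (m : ℕ) (w : σ →₀ ℕ) :
    IsUnit (rootHom m (MvPolynomial.monomial w (1 : R))) := by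
  rw [rootHom_monomial]
  refine .of_mul_eq_one (AddMonoidAlgebra.single (-divExponent m w) 1) ?_
  simp [AddMonoidAlgebra.single_mul_single, AddMonoidAlgebra.one_def]

theorem rootHom_expand {m : ℕ} (hm : 0 < m) (p : MvPolynomial σ R) :
    rootHom m (MvPolynomial.expand m p) = rootHom 1 p := by
  suffices (rootHom m).comp (MvPolynomial.expand m : _ →ₐ[R] _).toRingHom = rootHom 1 from
    RingHom.congr_fun this p
  refine MvPolynomial.ringHom_ext (fun r ↦ ?_) (fun i ↦ ?_)
  · simp [rootHom_C]
  · simpa [rootHom_X_pow hm] using (rootHom_X_pow one_pos i).symm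

theorem exists_rootHom_eq {m : ℕ} (hm : 0 < m) {f : RatExpPolynomial σ R}
    (hf : ∀ v ∈ f.coeff.support, v ∈ Set.range (divExponent m)) : ∃ p, rootHom m p = f :=
  ⟨AddMonoidAlgebra.comapDomain (divExponent m) (divExponent_injective hm) f,
    AddMonoidAlgebra.mapDomain_comapDomain hf _⟩

theorem exists_forall_rootHom_eq_monomial_mul [Finite σ] (s : Finset (RatExpPolynomial σ R)) :
    ∃ m : ℕ, 0 < m ∧ ∃ w : σ →₀ ℕ, ∀ f ∈ s, ∃ p : MvPolynomial σ R,
      rootHom m p = rootHom m (MvPolynomial.monomial w 1) * f := by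
  classical
  obtain ⟨m, hm, w, hw⟩ := exists_forall_divExponent_eq (s.biUnion fun f ↦ f.coeff.support)
  refine ⟨m, hm, w, fun f hf ↦ exists_rootHom_eq hm fun v hv ↦ ?_⟩
  obtain ⟨v', rfl⟩ : ∃ v', divExponent m w + v' = v := ⟨v - divExponent m w, by abel⟩
  rw [Finsupp.mem_support_iff, rootHom_monomial, AddMonoidAlgebra.coeff_single_mul_add, one_mul]
    at hv
  exact hw v' (Finset.mem_biUnion.2 ⟨f, hf, Finsupp.mem_support_iff.2 hv⟩)

theorem prime_rootHom_one [Finite σ] {p : MvPolynomial σ R}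
    (hp : ∀ m : ℕ, 0 < m → Prime (MvPolynomial.expand m p))
    (hp' : ¬IsUnit (rootHom 1 p : RatExpPolynomial σ R)) :
    Prime (rootHom 1 p : RatExpPolynomial σ R) := by
  classical
  refine ⟨?_, hp', ?_⟩
  · rw [map_ne_zero_iff _ (rootHom_injective one_pos)]
    simpa using (hp 1 one_pos).ne_zero
  rintro f g ⟨h, hfg⟩
  obtain ⟨m, hm, w, hw⟩ := exists_forall_rootHom_eq_monomial_mul {f, g, h}
  obtain ⟨f', hf'⟩ := hw f (by simp)
  obtain ⟨g', hg'⟩ := hw g (by simp)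
  obtain ⟨h', hh'⟩ := hw h (by simp)
  have mul_eq : f' * g' = MvPolynomial.expand m p * (MvPolynomial.monomial w 1 * h') := by
    apply rootHom_injective hm
    simp only [map_mul, hf', hg', hh', rootHom_expand hm]
    linear_combination rootHom m (MvPolynomial.monomial w 1) ^ 2 * hfg
  have dvd_of_dvd {q : RatExpPolynomial σ R} {q' : MvPolynomial σ R}
      (hq : rootHom m q' = rootHom m (MvPolynomial.monomial w 1) * q)
      (hdvd : MvPolynomial.expand m p ∣ q') : rootHom 1 p ∣ q := by
    have := map_dvd (rootHom m) hdvd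
    rwa [rootHom_expand hm, hq, (isUnit_rootHom_monomial m w).dvd_mul_left] at this
  exact ((hp m hm).dvd_or_dvd ⟨_, mul_eq⟩).imp (dvd_of_dvd hf') (dvd_of_dvd hg')

end Root

section Trinomial

variable {σ R : Type*} [CommRing R]

/-- The polynomial `z_i + z_j + c`: a sum of variables is of this form over the ring of
polynomials in all variables but the first two. -/
noncomputable def trinomial (i j : σ) (c : R) : RatExpPolynomial σ R :=
  X i + X j + C c

theorem map_trinomial {S : Type*} [CommRing S] (f : R →+* S) (i j : σ) (c : R) :
    AddMonoidAlgebra.mapRingHom (σ →₀ ℚ) f (trinomial i j c) = trinomial i j (f c) := by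
  simp [trinomial, map_X, C_apply]

theorem uncurry_C_trinomial {τ υ : Type*} (e : σ ⊕ τ ≃ υ) (i j : τ) (c : R) :
    uncurry e (C (trinomial i j c)) = trinomial (e (.inr i)) (e (.inr j)) c := by
  simp [trinomial, uncurry_C_X, uncurry_C_C]

theorem uncurry_trinomial_C {τ υ : Type*} (e : σ ⊕ τ ≃ υ) (i j : σ) (c : R) :
    uncurry e (trinomial i j (C c)) = trinomial (e (.inl i)) (e (.inl j)) c := by
  simp [trinomial, uncurry_X, uncurry_C_C]

theorem nontrivial_support_trinomial [Nontrivial R] {i j : σ} (hij : i ≠ j) (c : R) :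
    (trinomial i j c).coeff.support.Nontrivial := by
  have hji : Finsupp.single j (1 : ℚ) ≠ Finsupp.single i 1 := by
    simpa [Finsupp.single_left_inj] using hij.symm
  refine ⟨Finsupp.single i 1, ?_, Finsupp.single j 1, ?_, hji.symm⟩ <;>
    simp [trinomial, X, C_apply, Finsupp.single_eq_single_iff, hij, hij.symm]

theorem eq_zero_of_trinomial_dvd_C [IsDomain R] {i j : σ} (hij : i ≠ j) {c r : R}
    (h : trinomial i j c ∣ C r) : r = 0 := by
  obtain ⟨g, hg⟩ := h
  by_contra hr
  have hg0 : g ≠ 0 := by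
    rintro rfl
    exact hr (C_injective (hg.trans (by rw [mul_zero, map_zero])))
  have nontrivial := nontrivial_support_mul (nontrivial_support_trinomial hij c) hg0
  rw [← hg] at nontrivial
  have subset_zero : (C r : RatExpPolynomial σ R).coeff.support ⊆ {0} :=
    Finsupp.support_single_subset
  exact Finset.not_nontrivial_singleton (nontrivial.mono subset_zero)

theorem prime_trinomial [IsDomain R] [CharZero R] {c : R} (hc : c ≠ 0) :
    Prime (trinomial 0 1 c : RatExpPolynomial (Fin 2) R) := by
  have eq_rootHom : (trinomial 0 1 c : RatExpPolynomial (Fin 2) R) =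
      rootHom 1 (MvPolynomial.X 0 + MvPolynomial.X 1 + MvPolynomial.C c) := by
    have h (i : Fin 2) : rootHom 1 (MvPolynomial.X i : MvPolynomial (Fin 2) R) = X i := by
      simpa using rootHom_X_pow one_pos i
    rw [trinomial, map_add, map_add, h, h, rootHom_C]
  have not_isUnit : ¬IsUnit (trinomial 0 1 c : RatExpPolynomial (Fin 2) R) := fun h ↦
    one_ne_zero (eq_zero_of_trinomial_dvd_C (r := (1 : R)) zero_ne_one h.dvd)
  rw [eq_rootHom] at not_isUnit ⊢
  refine prime_rootHom_one (fun m hm ↦ ?_) not_isUnit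
  simpa using prime_X_pow_add_X_pow_add_C hm hc

theorem isPrime_span_singleton_trinomial [IsDomain R] [CharZero R] {c : R} (hc : c ≠ 0) :
    (Ideal.span {(trinomial 0 1 c : RatExpPolynomial (Fin 2) R)}).IsPrime :=
  (Ideal.span_singleton_prime (prime_trinomial hc).ne_zero).2 (prime_trinomial hc)

theorem quotientMk_comp_C_injective [IsDomain R] {i j : σ} (hij : i ≠ j) (c : R) :
    Function.Injective ((Ideal.Quotient.mk (Ideal.span {trinomial i j c})).comp C) := by
  refine (injective_iff_map_eq_zero _).2 fun r hr ↦ eq_zero_of_trinomial_dvd_C hij (c := c) ?_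
  rwa [RingHom.comp_apply, Ideal.Quotient.eq_zero_iff_mem, Ideal.mem_span_singleton] at hr

/-- Splitting off the first of `n + 1` pairs of variables. -/
def finSuccProdEquiv (n : ℕ) (κ : Type*) : (Fin n × κ) ⊕ κ ≃ Fin (n + 1) × κ where
  toFun := Sum.elim (fun p ↦ (p.1.succ, p.2)) (fun k ↦ (0, k))
  invFun p := Fin.cases (.inr p.2) (fun i ↦ .inl (i, p.2)) p.1
  left_inv := by rintro (_ | _) <;> rfl
  right_inv := by rintro ⟨i, k⟩; cases i using Fin.cases <;> rfl

theorem isPrime_span_trinomial {n : ℕ} {R : Type*} [CommRing R] [IsDomain R] [CharZero R]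
    {c : Fin n → R} (hc : ∀ i, c i ≠ 0) :
    (Ideal.span (Set.range fun i ↦
      (trinomial (i, 0) (i, 1) (c i) : RatExpPolynomial (Fin n × Fin 2) R))).IsPrime := by
  induction n generalizing R with
  | zero =>
    have : IsDomain (RatExpPolynomial (Fin 0 × Fin 2) R) := NoZeroDivisors.to_isDomain _
    rw [Set.range_eq_empty, Ideal.span_empty]
    exact Ideal.isPrime_bot
  | succ n ih =>
    let e := uncurry (R := R) (finSuccProdEquiv n (Fin 2))
    let Q := RatExpPolynomial (Fin 2) R ⧸ Ideal.span {trinomial 0 1 (c 0)}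
    let π : RatExpPolynomial (Fin 2) R →+* Q := Ideal.Quotient.mk _
    have : (Ideal.span {(trinomial 0 1 (c 0) : RatExpPolynomial (Fin 2) R)}).IsPrime :=
      isPrime_span_singleton_trinomial (hc 0)
    have hπ : Function.Injective (π.comp C) := quotientMk_comp_C_injective zero_ne_one (c 0)
    have : CharZero Q := charZero_of_injective_ringHom hπ
    have prime_quotient := ih (R := Q) (c := fun i ↦ π (C (c i.succ)))
      fun i ↦ (map_ne_zero_iff _ hπ).2 (hc i.succ)
    have prime_insert : (Ideal.span (insert (C (trinomial 0 1 (c 0)))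
        (Set.range fun i ↦ (trinomial (i, 0) (i, 1) (C (c i.succ)) :
          RatExpPolynomial (Fin n × Fin 2) (RatExpPolynomial (Fin 2) R))))).IsPrime := by
      apply isPrime_span_insert_singleZeroRingHom
      rw [← Set.range_comp]
      simpa only [Function.comp_def, map_trinomial] using prime_quotient
    have prime_image := isPrime_span_image_equiv e prime_insert
    rw [Set.image_insert_eq, ← Set.range_comp] at prime_image
    rw [Fin.range_fin_succ]
    simpa only [e, Function.comp_def, uncurry_C_trinomial, uncurry_trinomial_C] using! prime_image

end Trinomial

section DisjointSums

variable {σ R : Type*} [CommRing R]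

theorem sum_X_ne_zero [CharZero R] {κ : Type*} [Fintype κ] [Nonempty κ] (x : κ → σ) :
    (∑ j, X (x j) : RatExpPolynomial σ R) ≠ 0 := by
  classical
  obtain ⟨j₀⟩ := ‹Nonempty κ›
  have coeff_eq : (∑ j, X (x j) : RatExpPolynomial σ R).coeff (Finsupp.single (x j₀) 1) =
      (Finset.univ.filter fun j ↦ x j = x j₀).card := by
    simp [X, Finsupp.single_apply, Finsupp.single_left_inj]
  intro h
  rw [h] at coeff_eq
  exact Finset.card_ne_zero_of_mem (a := j₀) (by simp) (Nat.cast_eq_zero.1 coeff_eq.symm)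

theorem isPrime_span_add_add_sum_X [IsDomain R] [CharZero R] {n : ℕ} {y : Fin n × Fin 2 → σ}
    (hy : Function.Injective y) {t : Fin n → Finset σ} (ht : ∀ i, (t i).Nonempty)
    (hyt : ∀ i p, y p ∉ t i) :
    (Ideal.span (Set.range fun i ↦
      (X (y (i, 0)) + X (y (i, 1)) + ∑ j ∈ t i, X j : RatExpPolynomial σ R))).IsPrime := by
  classical
  let ρ : Set σ := (Set.range y)ᶜ
  have hρ (i : Fin n) (j : t i) : j.1 ∈ ρ := by
    rintro ⟨p, hp⟩
    exact hyt i p (hp ▸ j.2)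
  let e : (Fin n × Fin 2) ⊕ ρ ≃ σ :=
    ((Equiv.ofInjective y hy).sumCongr (.refl _)).trans (Equiv.Set.sumCompl _)
  have e_inl (p : Fin n × Fin 2) : e (.inl p) = y p := rfl
  have e_inr (j : ρ) : e (.inr j) = j := rfl
  have : IsDomain (RatExpPolynomial ρ R) := NoZeroDivisors.to_isDomain _
  have : CharZero (RatExpPolynomial ρ R) := charZero_of_injective_ringHom C_injective
  have (i : Fin n) : Nonempty (t i) := (ht i).to_subtype
  have prime_trinomials := isPrime_span_trinomial (R := RatExpPolynomial ρ R)
    (c := fun i ↦ ∑ j : t i, X ⟨j, hρ i j⟩) fun i ↦ sum_X_ne_zero _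
  have prime_image := isPrime_span_image_equiv (uncurry e) prime_trinomials
  have image_eq (i : Fin n) : uncurry e (trinomial (i, 0) (i, 1) (∑ j : t i, X ⟨j, hρ i j⟩)) =
      (X (y (i, 0)) + X (y (i, 1)) + ∑ j ∈ t i, X j : RatExpPolynomial σ R) := by
    simp only [trinomial, map_add, map_sum, uncurry_X, uncurry_C_X, e_inl, e_inr]
    rw [Finset.sum_coe_sort (t i) X]
  rw [← Set.range_comp] at prime_image
  simpa only [Function.comp_def, image_eq] using! prime_image

theorem isPrime_span_sum_X_of_fin [IsDomain R] [CharZero R] {n : ℕ} {s : Fin n → Finset σ}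
    (hs : Pairwise (Function.onFun Disjoint s)) (hcard : ∀ i, 2 < (s i).card) :
    (Ideal.span (Set.range fun i ↦ (∑ j ∈ s i, X j : RatExpPolynomial σ R))).IsPrime := by
  classical
  choose a ha b hb c hc hab hac hbc using fun i ↦ Finset.two_lt_card.1 (hcard i)
  let y : Fin n × Fin 2 → σ := fun p ↦ ![a p.1, b p.1] p.2
  have hy_mem (p : Fin n × Fin 2) : y p ∈ s p.1 := by
    obtain ⟨i, j⟩ := p
    fin_cases j
    exacts [ha i, hb i]
  have eq_of_mem {i i' : Fin n} {j : σ} (hj : j ∈ s i) (hj' : j ∈ s i') : i = i' := by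
    by_contra h
    exact Finset.disjoint_left.1 (hs h) hj hj'
  have hy : Function.Injective y := by
    rintro ⟨i, j⟩ ⟨i', j'⟩ h
    obtain rfl : i = i' := eq_of_mem (hy_mem (i, j)) (h ▸ hy_mem (i', j'))
    fin_cases j <;> fin_cases j' <;> simp_all [y, eq_comm]
  let t (i : Fin n) : Finset σ := ((s i).erase (a i)).erase (b i)
  have ht (i : Fin n) : (t i).Nonempty := ⟨c i, by simp [t, hc, (hac i).symm, (hbc i).symm]⟩
  have hyt (i : Fin n) (p : Fin n × Fin 2) : y p ∉ t i := by
    intro hp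
    obtain rfl : p.1 = i :=
      eq_of_mem (hy_mem p) (Finset.mem_of_mem_erase (Finset.mem_of_mem_erase hp))
    obtain ⟨i, j⟩ := p
    fin_cases j <;> simp [y, t] at hp
  have sum_eq (i : Fin n) : X (y (i, 0)) + X (y (i, 1)) + ∑ j ∈ t i, X j =
      (∑ j ∈ s i, X j : RatExpPolynomial σ R) := by
    rw [← Finset.add_sum_erase _ _ (ha i),
      ← Finset.add_sum_erase _ _ (Finset.mem_erase.2 ⟨(hab i).symm, hb i⟩), ← add_assoc]
    rfl
  simpa only [sum_eq] using isPrime_span_add_add_sum_X (R := R) hy ht hyt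

end DisjointSums

end RatExpPolynomial

theorem stmt0_general {R σ ι : Type*} [CommRing R] [IsDomain R] [CharZero R]
    {s : ι → Finset σ} (hs : Pairwise (Function.onFun Disjoint s)) (hcard : ∀ i, 2 < (s i).card) :
    (Ideal.span (Set.range fun i ↦ (∑ j ∈ s i, .X j : RatExpPolynomial σ R))).IsPrime :=
  isPrime_span_range_of_fin fun _ g ↦
    RatExpPolynomial.isPrime_span_sum_X_of_fin (hs.comp_of_injective g.injective) (hcard <| g ·)

/-- The `i`-th block `{3i, 3i + 1, 3i + 2}` of indices, counted from zero. -/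
def triple {n : ℕ} (i : Fin n) : Finset (Fin (3 * n)) :=
  {⟨3 * i, by omega⟩, ⟨3 * i + 1, by omega⟩, ⟨3 * i + 2, by omega⟩}

theorem div_three_eq_of_mem_triple {n : ℕ} {i : Fin n} {k : Fin (3 * n)} (hk : k ∈ triple i) :
    k.val / 3 = i := by
  simp only [triple, Finset.mem_insert, Finset.mem_singleton, Fin.ext_iff] at hk
  omega

theorem pairwise_disjoint_triple (n : ℕ) :
    Pairwise (Function.onFun Disjoint (triple : Fin n → Finset (Fin (3 * n)))) :=
  fun _ _ hij ↦ Finset.disjoint_left.2 fun _ hi hj ↦ hij <| Fin.ext <|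
    (div_three_eq_of_mem_triple hi).symm.trans (div_three_eq_of_mem_triple hj)

theorem two_lt_card_triple {n : ℕ} (i : Fin n) : 2 < (triple i).card := by
  simp [triple, Fin.ext_iff]

/-- For every `n`, in the group algebra `ℂ[ℚ^(3(n+1))]`, the ideal generated by the
`n+1` elements `z_{3i} + z_{3i+1} + z_{3i+2}` (for `i = 0, …, n`) is prime, where `z j`
is the basis monomial corresponding to the `j`-th standard basis vector. -/
theorem stmt0 (n : ℕ) :
    (Ideal.span {p : AddMonoidAlgebra ℂ (Fin (3 * (n + 1)) →₀ ℚ) |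
        ∃ i : Fin (n + 1), p =
          AddMonoidAlgebra.single
            (Finsupp.single (⟨3 * i.val, by have := i.isLt; omega⟩ : Fin (3 * (n + 1))) (1 : ℚ)) (1 : ℂ) +
          AddMonoidAlgebra.single
            (Finsupp.single (⟨3 * i.val + 1, by have := i.isLt; omega⟩ : Fin (3 * (n + 1))) (1 : ℚ)) (1 : ℂ) +
          AddMonoidAlgebra.single
            (Finsupp.single (⟨3 * i.val + 2, by have := i.isLt; omega⟩ : Fin (3 * (n + 1))) (1 : ℚ)) (1 : ℂ)}).IsPrime := by
  convert stmt0_general (R := ℂ) (pairwise_disjoint_triple (n + 1)) two_lt_card_triple using 2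
  ext p
  simp [triple, eq_comm, RatExpPolynomial.X, add_assoc]
end

section
/- In the group algebra ℂ[ℚ^3] (i.e. AddMonoidAlgebra ℂ (Fin 3 →₀ ℚ)), the ideal generated by the single element z₀ + z₁ + z₂ — where z_j denotes the basis monomial corresponding to the finitely supported function sending j to 1 and everything else to 0 — is a prime ideal. -/
/-!
Every element of `R[ℚ^σ]` has only finitely many exponents, so finitely many elements always lie
in the image of some embedding `R[ℤ^σ] → R[ℚ^σ]` dividing exponents by `N ≥ 1`. This embedding
carries the Fermat polynomial `∑ zᵢ ^ N` to `∑ zᵢ`; hence `∑ zᵢ` is prime as soon as all Fermat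
polynomials are prime in the Laurent polynomial ring `R[ℤ^σ]`. That ring is the localization of
`R[ℕ^σ]` at the monomials, so it is enough that the Fermat polynomial is prime in `R[ℕ^σ]`
and divides no monomial. In at least three variables it is `X₀ ^ N + g`, where `g` is the Fermat
polynomial in the remaining variables; `g` is squarefree by the derivative criterion, and
Eisenstein's criterion applies at any prime factor of `g`.
-/

section Polynomial

open Polynomial

variable {R : Type*} [CommRing R] [IsDomain R] {n : ℕ} {g : R}

theorem squarefree_X_pow_add_C (hn : (n : R) ≠ 0) (hg : g ≠ 0) :
    Squarefree (X ^ n + C g : R[X]) := by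
  intro h hh
  have hn₀ : n ≠ 0 := by rintro rfl; simp at hn
  have h_dvd : h ∣ X ^ n + C g := dvd_of_mul_left_dvd hh
  have h_dvd_derivative : h ∣ C (n : R) * X ^ (n - 1) := by
    have hder : derivative (X ^ n + C g) = C (n : R) * X ^ (n - 1) := by simp [derivative_X_pow]
    rw [← sq] at hh
    simpa only [hder, Nat.add_one_sub_one, pow_one] using pow_sub_one_dvd_derivative_of_pow_dvd hh
  have h_dvd_C : h ∣ C (n * g) := by
    have euler : C (n * g) = C (n : R) * (X ^ n + C g) - X * (C (n : R) * X ^ (n - 1)) := by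
      rw [← mul_pow_sub_one hn₀ (X : R[X]), C_mul]
      ring
    rw [euler]
    exact dvd_sub (h_dvd.mul_left _) (h_dvd_derivative.mul_left _)
  have h_deg : h.natDegree ≤ 0 :=
    (natDegree_le_of_dvd h_dvd_C (C_ne_zero.2 (mul_ne_zero hn hg))).trans (natDegree_C _).le
  by_contra hu
  exact h_deg.not_gt
    (natDegree_pos_of_not_isUnit_of_dvd_monic (monic_X_pow_add_C g hn₀) hu h_dvd)

theorem prime_X_pow_add_C [UniqueFactorizationMonoid R] (hn : n ≠ 0) (hg : Squarefree g)
    (hg' : ¬IsUnit g) : Prime (X ^ n + C g : R[X]) := by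
  obtain ⟨p, hp, hpg⟩ := WfDvdMonoid.exists_irreducible_factor hg' hg.ne_zero
  have hp_span : (Ideal.span {p}).IsPrime := (Ideal.span_singleton_prime hp.ne_zero).2 hp.prime
  have hmonic : (X ^ n + C g).Monic := monic_X_pow_add_C g hn
  have hdeg : (X ^ n + C g).natDegree = n := natDegree_X_pow_add_C
  have heis : (X ^ n + C g).IsEisensteinAt (Ideal.span {p}) := by
    refine hmonic.isEisensteinAt_of_mem_of_notMem hp_span.ne_top (fun {k} hk ↦ ?_) ?_
    · rw [hdeg] at hk
      rw [Ideal.mem_span_singleton, coeff_add, coeff_X_pow, if_neg hk.ne, zero_add, coeff_C]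
      split_ifs
      exacts [hpg, dvd_zero p]
    · rw [Ideal.span_singleton_pow, Ideal.mem_span_singleton, sq]
      simpa [hn.symm] using fun h ↦ hp.not_isUnit (hg p h)
  exact (heis.irreducible hp_span hmonic.isPrimitive (by omega)).prime

end Polynomial

section MvPolynomial

open MvPolynomial

theorem not_dvd_monomial_of_prime {σ R : Type*} [CommRing R] [IsDomain R] {p : MvPolynomial σ R}
    (hp : Prime p) (hX : ∀ i, ¬X i ∣ p) (m : σ →₀ ℕ) : ¬p ∣ monomial m 1 := by
  rw [monomial_eq, C_1, one_mul]
  intro h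
  obtain ⟨i, -, hi⟩ := hp.exists_mem_finset_dvd h
  exact hX i (hp.associated_of_dvd X_prime (hp.dvd_of_dvd_pow hi)).symm.dvd

theorem eval_piSingle_psum {σ R : Type*} [Fintype σ] [DecidableEq σ] [CommSemiring R] {N : ℕ}
    (hN : N ≠ 0) (i : σ) : eval (Pi.single i 1) (psum σ R N) = 1 := by
  simp [psum, Pi.single_apply, ite_pow, hN]

theorem not_isUnit_psum {σ R : Type*} [Fintype σ] [CommSemiring R] [Nontrivial R] {N : ℕ}
    (hN : N ≠ 0) : ¬IsUnit (psum σ R N) := by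
  intro h
  simpa [psum, hN] using h.map constantCoeff

theorem not_X_dvd_psum {σ R : Type*} [Fintype σ] [Nontrivial σ] [CommSemiring R] [Nontrivial R]
    {N : ℕ} (hN : N ≠ 0) (i : σ) : ¬X i ∣ psum σ R N := by
  classical
  intro h
  obtain ⟨j, hj⟩ := exists_ne i
  simpa [eval_piSingle_psum hN, hj.symm] using map_dvd (eval (Pi.single j 1)) h

theorem finSuccEquiv_psum (R : Type*) [CommSemiring R] (n N : ℕ) :
    finSuccEquiv R n (psum (Fin (n + 1)) R N) =
      Polynomial.X ^ N + Polynomial.C (psum (Fin n) R N) := by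
  simp [psum, Fin.sum_univ_succ, finSuccEquiv_X_zero, finSuccEquiv_X_succ]

variable {R : Type*} [CommRing R] [IsDomain R] {N : ℕ}

theorem squarefree_psum_fin (hN : (N : R) ≠ 0) (n : ℕ) : Squarefree (psum (Fin (n + 2)) R N) := by
  have hN₀ : N ≠ 0 := by rintro rfl; simp at hN
  have hg : psum (Fin (n + 1)) R N ≠ 0 := fun h ↦ by
    simpa [h] using eval_piSingle_psum (R := R) hN₀ (0 : Fin (n + 1))
  have hsq : Squarefree (finSuccEquiv R (n + 1) (psum (Fin (n + 2)) R N)) := by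
    rw [finSuccEquiv_psum]
    exact squarefree_X_pow_add_C (by rwa [← map_natCast C, Ne, C_eq_zero]) hg
  intro p hp
  exact (MulEquiv.isUnit_map (finSuccEquiv R (n + 1))).1 <|
    hsq _ (by simpa only [map_mul] using map_dvd (finSuccEquiv R (n + 1)) hp)

theorem prime_psum [UniqueFactorizationMonoid R] {σ : Type*} [Fintype σ]
    (hσ : 3 ≤ Fintype.card σ) (hN : (N : R) ≠ 0) : Prime (psum σ R N) := by
  have hN₀ : N ≠ 0 := by rintro rfl; simp at hN
  obtain ⟨n, hn⟩ := Nat.exists_eq_add_of_le' hσ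
  rw [← MulEquiv.prime_iff (renameEquiv R (Fintype.equivFinOfCardEq hn)), renameEquiv_apply,
    rename_psum, ← MulEquiv.prime_iff (finSuccEquiv R (n + 2)), finSuccEquiv_psum]
  exact prime_X_pow_add_C hN₀ (squarefree_psum_fin hN n) (not_isUnit_psum hN₀)

end MvPolynomial

section AddMonoidAlgebra

open AddMonoidAlgebra

variable {R : Type*} [CommSemiring R]

theorem mem_range_mapDomainRingHom {M G : Type*} [AddMonoid M] [AddMonoid G] {f : M →+ G}
    (hf : Function.Injective f) {x : AddMonoidAlgebra R G}
    (hx : (x.coeff.support : Set G) ⊆ Set.range f) : x ∈ Set.range (mapDomainRingHom R f) :=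
  ⟨comapDomain f hf x, mapDomain_comapDomain hx hf⟩

theorem mapDomainRingHom_injective {M G : Type*} [AddMonoid M] [AddMonoid G] {f : M →+ G}
    (hf : Function.Injective f) : Function.Injective (mapDomainRingHom R f) :=
  mapDomain_injective hf

theorem mapDomainRingHom_psum {σ G : Type*} [Fintype σ] [AddMonoid G] (f : (σ →₀ ℕ) →+ G)
    (N : ℕ) : mapDomainRingHom R f (MvPolynomial.psum σ R N) =
      ∑ i, single (f (Finsupp.single i N)) 1 := by
  simp only [MvPolynomial.psum, map_sum, MvPolynomial.X_pow_eq_monomial,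
    ← MvPolynomial.single_eq_monomial, mapDomainRingHom_apply, mapDomain_single]

variable {M G : Type*} [AddCommMonoid M] [AddCommGroup G] {f : M →+ G}

theorem exists_mul_single_mem_range (hG : ∀ g, ∃ m₁ m₂, g + f m₁ = f m₂)
    (x : AddMonoidAlgebra R G) :
    ∃ m, x * single (f m) 1 ∈ Set.range (mapDomainRingHom R f) := by
  induction x using AddMonoidAlgebra.induction_linear with
  | zero => exact ⟨0, 0, by simp⟩
  | add x y hx hy =>
    obtain ⟨m, a, ha⟩ := hx
    obtain ⟨n, b, hb⟩ := hy
    refine ⟨m + n, a * single n 1 + b * single m 1, ?_⟩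
    have hmn : single (f (m + n)) (1 : R) = single (f m) 1 * single (f n) 1 := by
      rw [single_mul_single, one_mul, map_add]
    have hsingle (k : M) : mapDomainRingHom R f (single k 1) = single (f k) 1 := by simp
    rw [map_add, map_mul, map_mul, ha, hb, hsingle, hsingle, hmn]
    ring
  | single g r =>
    obtain ⟨m₁, m₂, h⟩ := hG g
    exact ⟨m₁, single m₂ r, by simp [single_mul_single, h]⟩

theorem isLocalization_mapDomainRingHom (hf : Function.Injective f)
    (hG : ∀ g, ∃ m₁ m₂, g + f m₁ = f m₂) :
    letI := (mapDomainRingHom R f).toAlgebra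
    IsLocalization (MonoidHom.mrange (of R M)) (AddMonoidAlgebra R G) := by
  let := (mapDomainRingHom R f).toAlgebra
  refine ⟨⟨?_, fun x ↦ ?_, fun {x y} h ↦ ⟨1, ?_⟩⟩⟩
  · rintro ⟨-, m, rfl⟩
    refine IsUnit.of_mul_eq_one (single (-f m.toAdd) 1) ?_
    simp [RingHom.algebraMap_toAlgebra, single_mul_single, one_def]
  · obtain ⟨m, a, ha⟩ := exists_mul_single_mem_range hG x
    refine ⟨(a, ⟨_, .ofAdd m, rfl⟩), ?_⟩
    simpa [RingHom.algebraMap_toAlgebra] using ha.symm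
  · rw [mapDomainRingHom_injective hf h]

theorem prime_mapDomainRingHom {R : Type*} [CommRing R] (hf : Function.Injective f)
    (hG : ∀ g, ∃ m₁ m₂, g + f m₁ = f m₂) {p : AddMonoidAlgebra R M} (hp : Prime p)
    (hpm : ∀ m, ¬p ∣ single m 1) : Prime (mapDomainRingHom R f p) := by
  let := (mapDomainRingHom R f).toAlgebra
  have := isLocalization_mapDomainRingHom (R := R) hf hG
  have hne : mapDomainRingHom R f p ≠ 0 :=
    (map_ne_zero_iff _ (mapDomainRingHom_injective hf)).2 hp.ne_zero
  have hdisj : Disjoint (MonoidHom.mrange (of R M) : Set (AddMonoidAlgebra R M))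
      (Ideal.span {p}) := by
    rw [Set.disjoint_left]
    rintro - ⟨m, rfl⟩ hm
    exact hpm m.toAdd (Ideal.mem_span_singleton.1 hm)
  rw [← Ideal.span_singleton_prime hne, ← Set.image_singleton, ← Ideal.map_span]
  exact IsLocalization.isPrime_of_isPrime_disjoint _ _ _
    ((Ideal.span_singleton_prime hp.ne_zero).2 hp) hdisj

end AddMonoidAlgebra

theorem prime_of_forall_finset_subset_range {A S F : Type*} [CommMonoidWithZero A]
    [CommMonoidWithZero S] [FunLike F A S] [MonoidWithZeroHomClass F A S] {x : S}
    (h : ∀ s : Finset S, ∃ φ : F, Function.Injective φ ∧ (s : Set S) ⊆ Set.range φ ∧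
      ∃ p, Prime p ∧ φ p = x) : Prime x := by
  classical
  refine ⟨?_, fun hx ↦ ?_, fun a b ⟨c, hc⟩ ↦ ?_⟩
  · obtain ⟨φ, hφ, -, p, hp, rfl⟩ := h ∅
    exact (map_ne_zero_iff φ hφ).2 hp.ne_zero
  · obtain ⟨y, hy⟩ := isUnit_iff_exists_inv.1 hx
    obtain ⟨φ, hφ, hs, p, hp, rfl⟩ := h {y}
    obtain ⟨q, rfl⟩ := hs (by simp : y ∈ _)
    exact hp.not_isUnit (.of_mul_eq_one q (hφ (by simpa using hy)))
  · obtain ⟨φ, hφ, hs, p, hp, rfl⟩ := h {a, b, c}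
    obtain ⟨a, rfl⟩ := hs (by simp : a ∈ _)
    obtain ⟨b, rfl⟩ := hs (by simp : b ∈ _)
    obtain ⟨c, rfl⟩ := hs (by simp : c ∈ _)
    have hdvd : p ∣ a * b := ⟨c, hφ (by simpa using hc)⟩
    exact (hp.dvd_or_dvd hdvd).imp (map_dvd φ) (map_dvd φ)

section Exponents

variable {σ : Type*}

/-- The inclusion `ℕ^σ → ℤ^σ` of the exponents of polynomials into those of Laurent
polynomials. -/
noncomputable def natExponentCast (σ : Type*) : (σ →₀ ℕ) →+ (σ →₀ ℤ) :=
  Finsupp.mapRange.addMonoidHom (Nat.castAddMonoidHom ℤ)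

@[simp]
theorem natExponentCast_apply (e : σ →₀ ℕ) (i : σ) : natExponentCast σ e i = e i := rfl

theorem natExponentCast_injective : Function.Injective (natExponentCast σ) :=
  Finsupp.mapRange_injective _ Nat.cast_zero Nat.cast_injective

theorem exists_add_natExponentCast_eq (e : σ →₀ ℤ) :
    ∃ m₁ m₂, e + natExponentCast σ m₁ = natExponentCast σ m₂ := by
  refine ⟨e.mapRange (fun z ↦ (-z).toNat) rfl, e.mapRange Int.toNat rfl, ?_⟩
  ext i
  simp only [Finsupp.add_apply, natExponentCast_apply, Finsupp.mapRange_apply]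
  omega

/-- The map `e ↦ e / N` from `ℤ^σ` to `ℚ^σ`, so that `R[ℤ^σ] → R[ℚ^σ]` sends `zᵢ` to
`zᵢ ^ (1 / N)`. It is only meaningful for `N ≠ 0`. -/
noncomputable def exponentDiv (σ : Type*) (N : ℕ) : (σ →₀ ℤ) →+ (σ →₀ ℚ) :=
  Finsupp.mapRange.addMonoidHom
    ((AddMonoidHom.mulRight (N : ℚ)⁻¹).comp (Int.castAddHom ℚ))

@[simp]
theorem exponentDiv_apply (N : ℕ) (e : σ →₀ ℤ) (i : σ) : exponentDiv σ N e i = e i / N := by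
  simp [exponentDiv, div_eq_mul_inv]

theorem exponentDiv_injective {N : ℕ} (hN : N ≠ 0) : Function.Injective (exponentDiv σ N) := by
  intro a b h
  ext i
  simpa [hN] using DFunLike.congr_fun h i

theorem mem_range_exponentDiv {N : ℕ} (hN : N ≠ 0) {q : σ →₀ ℚ} (hq : ∀ i, (q i).den ∣ N) :
    q ∈ Set.range (exponentDiv σ N) := by
  refine ⟨q.mapRange (fun r ↦ r.num * (N / r.den : ℕ)) (by simp), ?_⟩
  ext i
  have hNq : ((N / (q i).den : ℕ) : ℚ) = N / (q i).den :=
    Nat.cast_div (hq i) (Nat.cast_ne_zero.2 (q i).den_ne_zero)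
  have hN' : (N : ℚ) ≠ 0 := Nat.cast_ne_zero.2 hN
  simp only [exponentDiv_apply, Finsupp.mapRange_apply, Int.cast_mul, Int.cast_natCast, hNq]
  nth_rw 3 [← Rat.num_div_den (q i)]
  field_simp

theorem exists_subset_range_exponentDiv [Finite σ] (T : Finset (σ →₀ ℚ)) :
    ∃ N ≠ 0, (T : Set (σ →₀ ℚ)) ⊆ Set.range (exponentDiv σ N) := by
  have := Fintype.ofFinite σ
  have hN : ∏ q ∈ T, ∏ i, (q i).den ≠ 0 := by simp [Finset.prod_ne_zero_iff]
  refine ⟨_, hN, fun q hq ↦ mem_range_exponentDiv hN fun i ↦ ?_⟩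
  exact (Finset.dvd_prod_of_mem (fun i ↦ (q i).den) (Finset.mem_univ i)).trans
    (Finset.dvd_prod_of_mem (fun q ↦ ∏ i, (q i).den) hq)

theorem exponentDiv_natExponentCast_single {N : ℕ} (hN : N ≠ 0) (i : σ) :
    exponentDiv σ N (natExponentCast σ (Finsupp.single i N)) = Finsupp.single i 1 := by
  classical
  ext j
  by_cases h : i = j <;> simp [h, hN]

end Exponents

section FermatLaurent

open AddMonoidAlgebra

theorem exists_subset_range_mapDomainRingHom_exponentDiv {R σ : Type*}
    [CommSemiring R] [Finite σ] (s : Finset (AddMonoidAlgebra R (σ →₀ ℚ))) :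
    ∃ N ≠ 0, (s : Set (AddMonoidAlgebra R (σ →₀ ℚ))) ⊆
      Set.range (mapDomainRingHom R (exponentDiv σ N)) := by
  classical
  obtain ⟨N, hN, hT⟩ := exists_subset_range_exponentDiv (s.biUnion fun x ↦ x.coeff.support)
  refine ⟨N, hN, fun x hx ↦ mem_range_mapDomainRingHom (exponentDiv_injective hN) ?_⟩
  exact (Finset.coe_subset.2 (Finset.subset_biUnion_of_mem _ hx)).trans hT

variable {R σ : Type*} [CommRing R] [IsDomain R] [UniqueFactorizationMonoid R] [Fintype σ]

theorem prime_laurent_psum (hσ : 3 ≤ Fintype.card σ) {N : ℕ} (hN : (N : R) ≠ 0) :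
    Prime (mapDomainRingHom R (natExponentCast σ) (MvPolynomial.psum σ R N)) := by
  have : Nontrivial σ := Fintype.one_lt_card_iff_nontrivial.1 (by omega)
  have hN₀ : N ≠ 0 := by rintro rfl; simp at hN
  have hp : Prime (MvPolynomial.psum σ R N) := prime_psum hσ hN
  exact prime_mapDomainRingHom natExponentCast_injective exists_add_natExponentCast_eq hp
    (not_dvd_monomial_of_prime hp (not_X_dvd_psum hN₀))

theorem prime_sum_single [CharZero R] (hσ : 3 ≤ Fintype.card σ) :
    Prime (∑ i : σ, single (Finsupp.single i (1 : ℚ)) (1 : R)) := by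
  refine prime_of_forall_finset_subset_range
    (F := AddMonoidAlgebra R (σ →₀ ℤ) →+* AddMonoidAlgebra R (σ →₀ ℚ)) fun s ↦ ?_
  obtain ⟨N, hN, hs⟩ := exists_subset_range_mapDomainRingHom_exponentDiv s
  refine ⟨mapDomainRingHom R (exponentDiv σ N),
    mapDomainRingHom_injective (exponentDiv_injective hN), hs, _,
    prime_laurent_psum hσ (Nat.cast_ne_zero.2 hN), ?_⟩
  rw [← RingHom.comp_apply, ← mapDomainRingHom_comp, mapDomainRingHom_psum]
  simp only [AddMonoidHom.comp_apply, exponentDiv_natExponentCast_single hN]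

theorem stmt1_general [CharZero R] (hσ : 3 ≤ Fintype.card σ) :
    (Ideal.span {∑ i : σ, single (Finsupp.single i (1 : ℚ)) (1 : R)}).IsPrime :=
  (Ideal.span_singleton_prime (prime_sum_single hσ).ne_zero).2 (prime_sum_single hσ)

end FermatLaurent

open AddMonoidAlgebra in
/-- In the group algebra ℂ[ℚ³], the ideal generated by `z₀ + z₁ + z₂` is prime,
where `z j` is the basis monomial corresponding to the `j`-th standard basis vector. -/
theorem stmt1 :
    (Ideal.span
      { AddMonoidAlgebra.single (Finsupp.single (0 : Fin 3) (1 : ℚ)) (1 : ℂ) +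
        AddMonoidAlgebra.single (Finsupp.single (1 : Fin 3) (1 : ℚ)) (1 : ℂ) +
        AddMonoidAlgebra.single (Finsupp.single (2 : Fin 3) (1 : ℚ)) (1 : ℂ) } :
      Ideal (AddMonoidAlgebra ℂ (Fin 3 →₀ ℚ))).IsPrime := by
  simpa only [Fin.sum_univ_three] using stmt1_general (R := ℂ) (σ := Fin 3) (by simp)
end

section
/- For every integer k ≥ 1, the polynomial X₀^k + X₁^k + X₂^k is irreducible in the polynomial ring ℂ[X₀, X₁, X₂] (i.e. MvPolynomial (Fin 3) ℂ). -/
/-!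
View `∑ t, X t ^ k t` as a polynomial `T ^ m + a` in one variable over the polynomial ring in the
others. Over an algebraically closed field, the hypersurface `a = 0` has a point with all
coordinates but one equal to `1`, and there the partial derivative of `a` in the direction of such
a coordinate `X i` is `k i ≠ 0`. Hence `a` lies in the prime `P` of polynomials vanishing at this
point, but not in `P ^ 2`, because derivations map `P ^ 2` into `P`; Eisenstein's criterion at `P`
applies.
-/

theorem derivation_apply_mem_pow_smul_top {R A M : Type*} [CommSemiring R] [CommSemiring A]
    [AddCommMonoid M] [Algebra R A] [Module R M] [Module A M] (D : Derivation R A M)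
    {I : Ideal A} {n : ℕ} {a : A} (ha : a ∈ I ^ (n + 1)) : D a ∈ I ^ n • (⊤ : Submodule A M) := by
  induction n generalizing a with
  | zero => simp
  | succ n ih =>
    rw [pow_succ] at ha
    refine Submodule.mul_induction_on ha (fun u hu v hv ↦ ?_) fun u v hu hv ↦ ?_
    · have hvDu : v • D u ∈ I ^ (n + 1) • (⊤ : Submodule A M) := by
        rw [pow_succ', mul_smul]
        exact Submodule.smul_mem_smul hv (ih hu)
      rw [D.leibniz]
      exact add_mem (Submodule.smul_mem_smul hu trivial) hvDu
    · rw [map_add]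
      exact add_mem hu hv

theorem notMem_ker_sq_of_map_derivation_ne_zero {R A B : Type*} [CommSemiring R] [CommSemiring A]
    [Semiring B] [Algebra R A] (D : Derivation R A A) (φ : A →+* B) {a : A} (hDa : φ (D a) ≠ 0) :
    a ∉ RingHom.ker φ ^ 2 := fun ha ↦
  hDa <| by simpa using derivation_apply_mem_pow_smul_top D ha

section Eisenstein

open Polynomial

variable {A : Type*} [CommRing A]

theorem isEisensteinAt_X_pow_add_C {P : Ideal A} (hP : P ≠ ⊤) {a : A} (haP : a ∈ P)
    (haP2 : a ∉ P ^ 2) {m : ℕ} (hm : m ≠ 0) : (X ^ m + C a).IsEisensteinAt P where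
  leading := by
    rw [(monic_X_pow_add_C a hm).leadingCoeff]
    exact (Ideal.ne_top_iff_one P).1 hP
  mem {n} hn := by
    nontriviality A
    rw [natDegree_X_pow_add_C] at hn
    rw [coeff_add, coeff_X_pow, if_neg hn.ne, zero_add, coeff_C]
    split_ifs
    · exact haP
    · exact zero_mem P
  notMem := by simpa [coeff_X_pow, hm.symm] using haP2

theorem irreducible_X_pow_add_C_of_derivation [IsDomain A] {R B : Type*} [CommSemiring R]
    [Algebra R A] [Semiring B] [IsDomain B] (D : Derivation R A A) (φ : A →+* B) {a : A}
    (ha : φ a = 0) (hDa : φ (D a) ≠ 0) {m : ℕ} (hm : m ≠ 0) : Irreducible (X ^ m + C a) := by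
  have hprime : (RingHom.ker φ).IsPrime := RingHom.ker_isPrime φ
  have heis : (X ^ m + C a).IsEisensteinAt (RingHom.ker φ) :=
    isEisensteinAt_X_pow_add_C hprime.ne_top ha
      (notMem_ker_sq_of_map_derivation_ne_zero D φ hDa) hm
  refine heis.irreducible hprime (monic_X_pow_add_C a hm).isPrimitive ?_
  rw [natDegree_X_pow_add_C]
  exact Nat.pos_of_ne_zero hm

end Eisenstein

theorem exists_forall_ne_eq_one_and_sum_pow_eq_zero {τ L : Type*} [Fintype τ] [Field L]
    [IsAlgClosed L] (k : τ → ℕ) {l : τ} (hl : k l ≠ 0) :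
    ∃ p : τ → L, (∀ t ≠ l, p t = 1) ∧ ∑ t, p t ^ k t = 0 := by
  classical
  obtain ⟨ζ, hζ⟩ := IsAlgClosed.exists_pow_nat_eq
    (-∑ _t ∈ ({l} : Finset τ)ᶜ, (1 : L)) (Nat.pos_of_ne_zero hl)
  refine ⟨Function.update 1 l ζ, fun t ht ↦ by simp [ht], ?_⟩
  have hrest : ∑ t ∈ ({l} : Finset τ)ᶜ, Function.update (1 : τ → L) l ζ t ^ k t =
      ∑ _t ∈ ({l} : Finset τ)ᶜ, 1 :=
    Finset.sum_congr rfl fun _ ht ↦ by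
      rw [Function.update_of_ne (by simpa using ht), Pi.one_apply, one_pow]
  rw [Fintype.sum_eq_add_sum_compl l, hrest, Function.update_self, hζ, neg_add_cancel]

section MvPolynomial

open MvPolynomial

theorem pderiv_sum_X_pow {τ R : Type*} [Fintype τ] [CommSemiring R] (k : τ → ℕ) (i : τ) :
    pderiv i (∑ t, X t ^ k t : MvPolynomial τ R) =
      (k i : MvPolynomial τ R) * X i ^ (k i - 1) := by
  classical
  rw [map_sum, Fintype.sum_eq_single i fun _ ht ↦ by rw [pderiv_pow, pderiv_X_of_ne ht, mul_zero],
    pderiv_pow, pderiv_X_self, mul_one]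

theorem exists_aeval_sum_X_pow_eq_zero_and_aeval_pderiv_ne_zero {τ R L : Type*} [Fintype τ]
    [CommSemiring R] [Field L] [IsAlgClosed L] [Algebra R L] (k : τ → ℕ) {i l : τ} (hil : i ≠ l)
    (hi : (k i : L) ≠ 0) (hl : k l ≠ 0) :
    ∃ p : τ → L, aeval p (∑ t, X t ^ k t : MvPolynomial τ R) = 0 ∧
      aeval p (pderiv i (∑ t, X t ^ k t : MvPolynomial τ R)) ≠ 0 := by
  obtain ⟨p, hp, hsum⟩ := exists_forall_ne_eq_one_and_sum_pow_eq_zero (L := L) k hl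
  refine ⟨p, by simpa only [map_sum, map_pow, aeval_X] using hsum, ?_⟩
  rwa [pderiv_sum_X_pow, map_mul, map_natCast, map_pow, aeval_X, hp i hil, one_pow, mul_one]

theorem optionEquivLeft_sum_X_pow {τ R : Type*} [Fintype τ] [CommSemiring R]
    (k : Option τ → ℕ) :
    optionEquivLeft R τ (∑ t, X t ^ k t) =
      Polynomial.X ^ k none + Polynomial.C (∑ t, X t ^ k (some t)) := by
  simp only [Fintype.sum_option, map_add, map_sum, map_pow, optionEquivLeft_X_none,
    optionEquivLeft_X_some]

variable {R : Type*} [CommRing R] [IsDomain R]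

theorem irreducible_sum_X_pow_option {τ : Type*} [Fintype τ] (k : Option τ → ℕ) {i l : τ}
    (hil : i ≠ l) (hi : (k (some i) : R) ≠ 0) (hl : k (some l) ≠ 0) (hnone : k none ≠ 0) :
    Irreducible (∑ t, X t ^ k t : MvPolynomial (Option τ) R) := by
  have hiL : (k (some i) : AlgebraicClosure (FractionRing R)) ≠ 0 := by
    have : FaithfulSMul R (AlgebraicClosure (FractionRing R)) := .trans R (FractionRing R) _
    rw [← map_natCast (algebraMap R _)]
    exact (map_ne_zero_iff _ (FaithfulSMul.algebraMap_injective R _)).2 hi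
  obtain ⟨p, hzero, hsmooth⟩ := exists_aeval_sum_X_pow_eq_zero_and_aeval_pderiv_ne_zero (R := R)
    (fun t ↦ k (some t)) hil hiL hl
  rw [← MulEquiv.irreducible_iff (optionEquivLeft R τ), optionEquivLeft_sum_X_pow]
  exact irreducible_X_pow_add_C_of_derivation (pderiv i) (aeval p).toRingHom hzero hsmooth hnone

theorem stmt2_general {σ : Type*} [Fintype σ] (k : σ → ℕ) {i j l : σ} (hij : i ≠ j) (hil : i ≠ l)
    (hlj : l ≠ j) (hi : (k i : R) ≠ 0) (hj : k j ≠ 0) (hl : k l ≠ 0) :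
    Irreducible (∑ t, X t ^ k t : MvPolynomial σ R) := by
  classical
  let e : Option {t // t ≠ j} ≃ σ := Equiv.optionSubtypeNe j
  have hrename : renameEquiv R e (∑ t, X t ^ k (e t)) = ∑ t, X t ^ k t := by
    simpa only [map_sum, map_pow, renameEquiv_apply, rename_X] using
      e.sum_comp fun t ↦ (X t : MvPolynomial σ R) ^ k t
  rw [← hrename, MulEquiv.irreducible_iff (renameEquiv R e)]
  exact irreducible_sum_X_pow_option (fun t ↦ k (e t)) (i := ⟨i, hij⟩) (l := ⟨l, hlj⟩)
    (by simpa using hil) (by simpa [e] using hi) (by simpa [e] using hl) (by simpa [e] using hj)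

end MvPolynomial

/-- For every integer `k ≥ 1`, the polynomial `X₀^k + X₁^k + X₂^k` is irreducible
in `ℂ[X₀, X₁, X₂]`. -/
theorem stmt2 (k : ℕ) (hk : 1 ≤ k) :
    Irreducible
      (MvPolynomial.X 0 ^ k + MvPolynomial.X 1 ^ k + MvPolynomial.X 2 ^ k :
        MvPolynomial (Fin 3) ℂ) := by
  have hk0 : k ≠ 0 := Nat.one_le_iff_ne_zero.1 hk
  simpa only [Fin.sum_univ_three] using stmt2_general (R := ℂ) (fun _ : Fin 3 ↦ k)
    (i := 0) (j := 1) (l := 2) (by decide) (by decide) (by decide) (Nat.cast_ne_zero.2 hk0) hk0 hk0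
end

section
/- Let R be an integral domain which is a ℚ-algebra, equipped with a map E : R → R satisfying E 0 = 1 and E(x + y) = E x · E y for all x, y ∈ R. Then there exists a map E' : K → K on the fraction field K of R satisfying E' 0 = 1 and E'(x + y) = E' x · E' y for all x, y ∈ K, and such that E'(φ(r)) = φ(E r) for every r ∈ R, where φ : R → K is the canonical embedding. -/
/-!
The equation `E (x + y) = E x * E y` involves only the additive structure of the source of `E`.
As a `ℚ`-vector space, `R` is a direct summand of its fraction field `K`; composing `E` with a
linear projection `K → R`, in general not multiplicative, gives the extension.
-/

theorem exists_addChar_compAddMonoidHom_eq {k V W M : Type*} [DivisionRing k]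
    [AddCommGroup V] [Module k V] [AddCommGroup W] [Module k W] [Monoid M]
    (f : V →ₗ[k] W) (hf : Function.Injective f) (ψ : AddChar V M) :
    ∃ χ : AddChar W M, χ.compAddMonoidHom f.toAddMonoidHom = ψ := by
  obtain ⟨p, hp⟩ := f.exists_leftInverse_of_injective (LinearMap.ker_eq_bot.mpr hf)
  exact ⟨ψ.compAddMonoidHom p.toAddMonoidHom,
    DFunLike.ext _ _ fun v ↦ congrArg ψ (LinearMap.congr_fun hp v)⟩

theorem stmt4_general {k R K : Type*} [Field k] [Ring R] [Algebra k R] [Ring K] [Algebra k K]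
    (φ : R →ₐ[k] K) (hφ : Function.Injective φ)
    (E : R → R) (hE0 : E 0 = 1) (hEadd : ∀ x y : R, E (x + y) = E x * E y) :
    ∃ E' : K → K,
      E' 0 = 1 ∧ (∀ x y : K, E' (x + y) = E' x * E' y) ∧ ∀ r : R, E' (φ r) = φ (E r) := by
  let ψ : AddChar R R := ⟨E, hE0, hEadd⟩
  obtain ⟨χ, hχ⟩ := exists_addChar_compAddMonoidHom_eq φ.toLinearMap hφ
    ((φ : R →* K).compAddChar ψ)
  exact ⟨χ, χ.map_zero_eq_one, χ.map_add_eq_mul, DFunLike.congr_fun hχ⟩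

/-- Let `R` be an integral domain which is a `ℚ`-algebra, with an exponential map
`E : R → R` (i.e. `E 0 = 1` and `E (x + y) = E x * E y`). Then the exponential map
extends to the fraction field of `R`. -/
theorem stmt4 {R : Type*} [CommRing R] [IsDomain R] [Algebra ℚ R]
    (E : R → R) (hE0 : E 0 = 1) (hEadd : ∀ x y : R, E (x + y) = E x * E y) :
    ∃ E' : FractionRing R → FractionRing R,
      E' 0 = 1 ∧ (∀ x y : FractionRing R, E' (x + y) = E' x * E' y) ∧
      ∀ r : R, E' (algebraMap R (FractionRing R) r) = algebraMap R (FractionRing R) (E r) :=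
  stmt4_general (IsScalarTower.toAlgHom ℚ R (FractionRing R))
    (IsFractionRing.injective R (FractionRing R)) E hE0 hEadd
end

section
/- Let R be an E-ring and X ⊆ R a subset. Then Erad X = √[E] X; that is, the intersection of all prime E-ideals of R containing X (taken to be all of R if there are none) equals the union ⋃_{n ∈ ℕ} √[n] X of the inductively defined sets √[n] X. -/
/-- An E-ideal of an E-ring `(R, E)`: an ideal `I` such that `a ∈ I` implies `E a - 1 ∈ I`. -/
def IsEIdeal {R : Type*} [CommRing R] (E : R → R) (I : Ideal R) : Prop :=
  ∀ a ∈ I, E a - 1 ∈ I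

/-- `Erad E X` is the intersection of all prime E-ideals containing `X`
(all of `R` if there are none). -/
def Erad {R : Type*} [CommRing R] (E : R → R) (X : Set R) : Set R :=
  ⋂ I ∈ {I : Ideal R | I.IsPrime ∧ IsEIdeal E I ∧ X ⊆ ↑I}, (I : Set R)

/-- `eSpan E X` is the smallest E-ideal containing `X` (as a set: the intersection of
all E-ideals containing `X`). -/
def eSpan {R : Type*} [CommRing R] (E : R → R) (X : Set R) : Set R :=
  ⋂ I ∈ {I : Ideal R | IsEIdeal E I ∧ X ⊆ ↑I}, (I : Set R)

/-- The operators `√[n]` on subsets of `R`, defined inductively: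
`√[0] X` is the smallest E-ideal containing `X`, and
`√[n+1] X = √[n] {a | ∃ b₁ b₂, b₁ * b₂ ∈ √[n] X ∧ a ∈ √[n] (X ∪ {b₁}) ∩ √[n] (X ∪ {b₂})}`. -/
def nRad {R : Type*} [CommRing R] (E : R → R) : ℕ → Set R → Set R
  | 0, X => eSpan E X
  | n + 1, X => nRad E n {a | ∃ b₁ b₂ : R, b₁ * b₂ ∈ nRad E n X ∧
      a ∈ nRad E n (X ∪ {b₁}) ∩ nRad E n (X ∪ {b₂})}

/-- `√[E] X = ⋃ n, √[n] X`. -/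
def eRad {R : Type*} [CommRing R] (E : R → R) (X : Set R) : Set R :=
  ⋃ n : ℕ, nRad E n X

/-!
Every `√[n]` is a Scott continuous operator, and enlarging a set within the E-ideal it spans does
not change its `√[n]`; both properties pass to `√[E]`. Hence, if `a ∉ √[E] X`, Zorn's lemma provides
a maximal `Y ⊇ X` with `a ∉ √[E] Y`, and `Y` is an E-ideal. It is prime: if `x * y ∈ Y` with
`x, y ∉ Y`, then `a` lies in both `√[E] (Y ∪ {x})` and `√[E] (Y ∪ {y})` by maximality, and one
further step of the recursion puts `a` into `√[E] Y`.
-/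

section ScottContinuous

theorem scottContinuous_iSup {ι : Sort*} {α β : Type*} [CompleteLattice α] [CompleteLattice β]
    {f : ι → α → β} (hf : ∀ i, ScottContinuous (f i)) :
    ScottContinuous fun x ↦ ⨆ i, f i x := by
  refine .of_map_sSup fun d hne hd ↦ ?_
  simp_rw [(hf _).map_sSup hne hd, sSup_image]
  rw [iSup_comm]
  exact iSup_congr fun _ ↦ iSup_comm

theorem scottContinuous_sup_right {α : Type*} [SemilatticeSup α] (a : α) :
    ScottContinuous (· ⊔ a) :=
  (ScottContinuous.id.prodMk (.const a)).comp .sup₂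

theorem scottContinuous_submodule_coe {R M : Type*} [Semiring R] [AddCommMonoid M] [Module R M] :
    ScottContinuous ((↑) : Submodule R M → Set M) := by
  refine .of_map_sSup fun S hne hdir ↦ Set.ext fun x ↦ ?_
  simp only [SetLike.mem_coe, Submodule.mem_sSup_of_directed hne hdir, Set.sSup_eq_sUnion,
    Set.sUnion_image, Set.mem_iUnion, exists_prop]

theorem mem_apply_sUnion_iff {α β : Type*} {C : Set α → Set β} (hC : ScottContinuous C)
    {d : Set (Set α)} (hne : d.Nonempty) (hd : DirectedOn (· ⊆ ·) d) {b : β} :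
    b ∈ C (⋃₀ d) ↔ ∃ s ∈ d, b ∈ C s := by
  have hmap : C (⋃₀ d) = ⋃₀ (C '' d) := hC.map_sSup hne hd
  simp only [hmap, Set.sUnion_image, Set.mem_iUnion, exists_prop]

theorem exists_maximal_notMem {α β : Type*} {C : Set α → Set β} (hC : ScottContinuous C)
    {b : β} {X : Set α} (hb : b ∉ C X) : ∃ Y, X ⊆ Y ∧ Maximal (fun Z ↦ b ∉ C Z) Y := by
  refine zorn_subset_nonempty {Z | b ∉ C Z} (fun c hc hchain hne ↦ ?_) X hb
  refine ⟨⋃₀ c, fun hmem ↦ ?_, fun _ ↦ Set.subset_sUnion_of_mem⟩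
  obtain ⟨s, hs, hbs⟩ := (mem_apply_sUnion_iff hC hne hchain.directedOn).1 hmem
  exact hc hs hbs

end ScottContinuous

section PrimeStep

/-- The operation iterated in the definition of `√[n]`: the elements that `C` attaches to both
`X ∪ {b₁}` and `X ∪ {b₂}` for some product `b₁ * b₂ ∈ C X`. A prime ideal containing `C X` contains
one of the factors, so these elements are forced into it. -/
def primeStep {R : Type*} [Mul R] (C : Set R → Set R) (X : Set R) : Set R :=
  {a | ∃ b₁ b₂ : R, b₁ * b₂ ∈ C X ∧ a ∈ C (X ∪ {b₁}) ∩ C (X ∪ {b₂})}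

theorem primeStep_subset_primeStep {R : Type*} [Mul R] {C D : Set R → Set R} {X Y : Set R}
    (h : C X ⊆ D Y) (hadjoin : ∀ b, C (X ∪ {b}) ⊆ D (Y ∪ {b})) :
    primeStep C X ⊆ primeStep D Y :=
  fun _ ⟨b₁, b₂, hmul, h₁, h₂⟩ ↦ ⟨b₁, b₂, h hmul, hadjoin b₁ h₁, hadjoin b₂ h₂⟩

theorem subset_primeStep {R : Type*} [MulZeroClass R] {C : Set R → Set R} (hC : Monotone C)
    {X : Set R} (h0 : 0 ∈ C X) : C X ⊆ primeStep C X := fun _ ha ↦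
  have ha' := hC Set.subset_union_left ha
  ⟨0, 0, (mul_zero (0 : R)).symm ▸ h0, ha', ha'⟩

theorem primeStep_subset_of_isPrime {R : Type*} [Semiring R] {C : Set R → Set R}
    {P : Ideal R} (hP : P.IsPrime) (hC : ∀ Y : Set R, Y ⊆ P → C Y ⊆ P) {X : Set R} (hX : X ⊆ P) :
    primeStep C X ⊆ P := by
  have hadjoin : ∀ b ∈ P, C (X ∪ {b}) ⊆ P := fun b hb ↦
    hC _ (Set.union_subset hX (Set.singleton_subset_iff.2 hb))
  rintro a ⟨b₁, b₂, hmul, h₁, h₂⟩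
  exact (hP.mem_or_mem (hC X hX hmul)).elim (hadjoin b₁ · h₁) (hadjoin b₂ · h₂)

theorem scottContinuous_primeStep {R : Type*} [Mul R] {C : Set R → Set R}
    (hC : ScottContinuous C) : ScottContinuous (primeStep C) := by
  have hadjoin (b : R) : ScottContinuous fun X ↦ C (X ∪ {b}) :=
    (scottContinuous_sup_right ({b} : Set R)).comp hC
  refine .of_map_sSup fun d hne hd ↦ ?_
  rw [Set.sSup_eq_sUnion, Set.sSup_eq_sUnion, Set.sUnion_image]
  refine Set.Subset.antisymm ?_ <| Set.iUnion₂_subset fun s hs ↦ ?_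
  · rintro a ⟨b₁, b₂, hmul, h₁, h₂⟩
    obtain ⟨s, hs, hmul⟩ := (mem_apply_sUnion_iff hC hne hd).1 hmul
    obtain ⟨s₁, hs₁, h₁⟩ := (mem_apply_sUnion_iff (hadjoin b₁) hne hd).1 h₁
    obtain ⟨s₂, hs₂, h₂⟩ := (mem_apply_sUnion_iff (hadjoin b₂) hne hd).1 h₂
    obtain ⟨t, ht, hst, hs₁t⟩ := hd s hs s₁ hs₁
    obtain ⟨u, hu, htu, hs₂u⟩ := hd t ht s₂ hs₂
    exact Set.mem_biUnion hu ⟨b₁, b₂, hC.monotone (hst.trans htu) hmul,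
      (hadjoin b₁).monotone (hs₁t.trans htu) h₁, (hadjoin b₂).monotone hs₂u h₂⟩
  · have hsd : s ⊆ ⋃₀ d := Set.subset_sUnion_of_mem hs
    exact primeStep_subset_primeStep (hC.monotone hsd) fun b ↦ (hadjoin b).monotone hsd

end PrimeStep

section EIdeal

variable {R : Type*} [CommRing R] {E : R → R} {X Y : Set R}

theorem IsEIdeal.sInf {S : Set (Ideal R)} (hS : ∀ I ∈ S, IsEIdeal E I) :
    IsEIdeal E (sInf S) := fun a ha ↦
  Submodule.mem_sInf.2 fun I hI ↦ hS I hI a (Submodule.mem_sInf.1 ha I hI)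

theorem IsEIdeal.sSup_of_directedOn {S : Set (Ideal R)} (hS : ∀ I ∈ S, IsEIdeal E I)
    (hne : S.Nonempty) (hdir : DirectedOn (· ≤ ·) S) : IsEIdeal E (sSup S) := fun a ha ↦
  have ⟨I, hI, haI⟩ := (Submodule.mem_sSup_of_directed hne hdir).1 ha
  le_sSup hI (hS I hI a haI)

/-- The E-ideal generated by `X`, bundled as an ideal; `eSpan E X` is its underlying set. -/
def eIdealSpan (E : R → R) (X : Set R) : Ideal R :=
  sInf {I : Ideal R | IsEIdeal E I ∧ X ⊆ I}

theorem coe_eIdealSpan : (eIdealSpan E X : Set R) = eSpan E X :=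
  Submodule.coe_sInf _

theorem isEIdeal_eIdealSpan : IsEIdeal E (eIdealSpan E X) :=
  .sInf fun _ hI ↦ hI.1

theorem subset_eIdealSpan : X ⊆ eIdealSpan E X := fun _ ha ↦
  Submodule.mem_sInf.2 fun _ hI ↦ hI.2 ha

theorem eIdealSpan_le_iff {I : Ideal R} (hI : IsEIdeal E I) : eIdealSpan E X ≤ I ↔ X ⊆ I :=
  ⟨subset_eIdealSpan.trans, fun hX ↦ sInf_le ⟨hI, hX⟩⟩

theorem monotone_eIdealSpan : Monotone (eIdealSpan E) := fun _ _ hXY ↦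
  (eIdealSpan_le_iff isEIdeal_eIdealSpan).2 (hXY.trans subset_eIdealSpan)

theorem scottContinuous_eIdealSpan : ScottContinuous (eIdealSpan E) := by
  refine .of_map_sSup fun d hne hd ↦ le_antisymm ?_ <|
    sSup_le <| Set.forall_mem_image.2 fun _ hs ↦ monotone_eIdealSpan (le_sSup hs)
  have hsSup : IsEIdeal E (sSup (eIdealSpan E '' d)) :=
    .sSup_of_directedOn (Set.forall_mem_image.2 fun _ _ ↦ isEIdeal_eIdealSpan) (hne.image _)
      (hd.mono_comp fun _ _ h ↦ monotone_eIdealSpan h)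
  refine (eIdealSpan_le_iff hsSup).2 <| Set.sUnion_subset fun s hs ↦ ?_
  exact (eIdealSpan_le_iff hsSup).1 (le_sSup (Set.mem_image_of_mem _ hs))

theorem nRad_zero : nRad E 0 X = eIdealSpan E X :=
  coe_eIdealSpan.symm

theorem nRad_succ (n : ℕ) : nRad E (n + 1) X = nRad E n (primeStep (nRad E n) X) :=
  rfl

theorem scottContinuous_nRad (n : ℕ) : ScottContinuous (nRad E n) := by
  induction n with
  | zero =>
    have hcoe : nRad E 0 = (↑) ∘ eIdealSpan E := funext fun _ ↦ nRad_zero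
    exact hcoe ▸ scottContinuous_eIdealSpan.comp scottContinuous_submodule_coe
  | succ n ih => exact (scottContinuous_primeStep ih).comp ih

theorem zero_mem_nRad (n : ℕ) : (0 : R) ∈ nRad E n X := by
  induction n generalizing X with
  | zero =>
    rw [nRad_zero]
    exact (eIdealSpan E X).zero_mem
  | succ n ih => exact ih

theorem nRad_subset_primeStep (n : ℕ) : nRad E n X ⊆ primeStep (nRad E n) X :=
  subset_primeStep (scottContinuous_nRad n).monotone (zero_mem_nRad n)

theorem subset_nRad (n : ℕ) : X ⊆ nRad E n X := by
  induction n generalizing X with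
  | zero =>
    rw [nRad_zero]
    exact subset_eIdealSpan
  | succ n ih => exact ih.trans ((nRad_subset_primeStep n).trans ih)

theorem monotone_nRad_index : Monotone fun n ↦ nRad E n X :=
  monotone_nat_of_le_succ fun n ↦ (nRad_subset_primeStep n).trans (subset_nRad n)

theorem nRad_subset_nRad_of_subset_eIdealSpan (n : ℕ) (h : X ⊆ eIdealSpan E Y) :
    nRad E n X ⊆ nRad E n Y := by
  induction n generalizing X Y with
  | zero =>
    rw [nRad_zero, nRad_zero]
    exact (eIdealSpan_le_iff isEIdeal_eIdealSpan).2 h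
  | succ n ih =>
    have hadjoin (b : R) : X ∪ {b} ⊆ eIdealSpan E (Y ∪ {b}) :=
      Set.union_subset (h.trans (monotone_eIdealSpan Set.subset_union_left))
        (Set.subset_union_right.trans subset_eIdealSpan)
    rw [nRad_succ, nRad_succ]
    exact ih ((primeStep_subset_primeStep (ih h) fun b ↦ ih (hadjoin b)).trans subset_eIdealSpan)

theorem nRad_subset_of_isPrime {P : Ideal R} (hP : P.IsPrime) (hPE : IsEIdeal E P) (n : ℕ)
    (hX : X ⊆ P) : nRad E n X ⊆ P := by
  induction n generalizing X with
  | zero =>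
    rw [nRad_zero]
    exact (eIdealSpan_le_iff hPE).2 hX
  | succ n ih => exact ih (primeStep_subset_of_isPrime hP (fun _ ↦ ih) hX)

theorem scottContinuous_eRad : ScottContinuous (eRad E) :=
  scottContinuous_iSup scottContinuous_nRad

theorem subset_eRad : X ⊆ eRad E X :=
  (subset_nRad 0).trans (Set.subset_iUnion (fun n ↦ nRad E n X) 0)

theorem eRad_subset_eRad_of_subset_eIdealSpan (h : X ⊆ eIdealSpan E Y) : eRad E X ⊆ eRad E Y :=
  Set.iUnion_mono fun n ↦ nRad_subset_nRad_of_subset_eIdealSpan n h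

theorem primeStep_eRad_subset : primeStep (eRad E) X ⊆ eRad E X := by
  rintro a ⟨b₁, b₂, hmul, h₁, h₂⟩
  obtain ⟨m, hmul⟩ := Set.mem_iUnion.1 hmul
  obtain ⟨n₁, h₁⟩ := Set.mem_iUnion.1 h₁
  obtain ⟨n₂, h₂⟩ := Set.mem_iUnion.1 h₂
  let N := max m (max n₁ n₂)
  have hstep : a ∈ primeStep (nRad E N) X :=
    ⟨b₁, b₂, monotone_nRad_index (by omega) hmul, monotone_nRad_index (by omega) h₁,
      monotone_nRad_index (by omega) h₂⟩
  exact Set.mem_iUnion.2 ⟨N + 1, subset_nRad N hstep⟩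

theorem eRad_subset_Erad : eRad E X ⊆ Erad E X :=
  Set.subset_iInter₂ fun _ ⟨hP, hPE, hX⟩ ↦
    Set.iUnion_subset fun n ↦ nRad_subset_of_isPrime hP hPE n hX

theorem coe_eIdealSpan_eq_of_maximal {a : R} (hY : Maximal (fun Z ↦ a ∉ eRad E Z) Y) :
    (eIdealSpan E Y : Set R) = Y :=
  (hY.eq_of_subset (fun ha ↦ hY.prop (eRad_subset_eRad_of_subset_eIdealSpan subset_rfl ha))
    subset_eIdealSpan).symm

theorem isPrime_eIdealSpan_of_maximal {a : R} (hY : Maximal (fun Z ↦ a ∉ eRad E Z) Y) :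
    (eIdealSpan E Y).IsPrime := by
  have hmem {x : R} : x ∈ eIdealSpan E Y ↔ x ∈ Y := by
    rw [← SetLike.mem_coe, coe_eIdealSpan_eq_of_maximal hY]
  have haY : a ∉ Y := fun ha ↦ hY.prop (subset_eRad ha)
  have hadjoin {b : R} (hb : b ∉ Y) : a ∈ eRad E (Y ∪ {b}) := by
    by_contra ha
    exact hb (hY.le_of_ge ha Set.subset_union_left (Or.inr rfl))
  refine ⟨fun htop ↦ haY (hmem.1 (htop ▸ Submodule.mem_top)), fun {x y} hxy ↦ ?_⟩
  simp only [hmem] at hxy ⊢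
  by_contra! h
  exact hY.prop (primeStep_eRad_subset ⟨x, y, subset_eRad hxy, hadjoin h.1, hadjoin h.2⟩)

theorem Erad_subset_eRad : Erad E X ⊆ eRad E X := by
  intro a ha
  by_contra haX
  obtain ⟨Y, hXY, hY⟩ := exists_maximal_notMem scottContinuous_eRad haX
  have haY : a ∈ eIdealSpan E Y := Set.mem_iInter₂.1 ha (eIdealSpan E Y)
    ⟨isPrime_eIdealSpan_of_maximal hY, isEIdeal_eIdealSpan, hXY.trans subset_eIdealSpan⟩
  exact hY.prop (subset_eRad (coe_eIdealSpan_eq_of_maximal hY ▸ haY))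

end EIdeal

theorem stmt5_general {R : Type*} [CommRing R] (E : R → R) (X : Set R) :
    Erad E X = eRad E X :=
  Erad_subset_eRad.antisymm eRad_subset_Erad

/-- For an E-ring `R` and a subset `X ⊆ R`, `Erad X = √[E] X`. -/
theorem stmt5 {R : Type*} [CommRing R] (E : R → R)
    (hE0 : E 0 = 1) (hEadd : ∀ x y : R, E (x + y) = E x * E y) (X : Set R) :
    Erad E X = eRad E X :=
  stmt5_general E X
end

section
/- Let R be an E-ring, J ⊆ R a subset, and b₁, b₂ ∈ R with b₁·b₂ ∈ J. If a ∈ Erad(J ∪ {b₁}) ∩ Erad(J ∪ {b₂}), then a ∈ Erad J. -/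
section

variable {R : Type*}

open scoped Pointwise

theorem mul_subset_coe_ideal_iff [CommSemiring R] {P : Ideal R} (hP : P.IsPrime) {X Y : Set R} :
    X * Y ⊆ P ↔ X ⊆ P ∨ Y ⊆ P := by
  rw [← Ideal.span_le, ← Ideal.span_mul_span', hP.mul_le, Ideal.span_le, Ideal.span_le]

variable [CommRing R] {E : R → R} {X : Set R} {a : R}

theorem mem_erad_iff :
    a ∈ Erad E X ↔ ∀ P : Ideal R, P.IsPrime → IsEIdeal E P → X ⊆ P → a ∈ P := by
  simp [Erad]

theorem stmt6_general (E : R → R) (J X Y : Set R) :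
    Erad E (J ∪ X * Y) = Erad E (J ∪ X) ∩ Erad E (J ∪ Y) := by
  ext a
  have union_mul_subset_iff {P : Ideal R} (hP : P.IsPrime) :
      J ∪ X * Y ⊆ P ↔ J ∪ X ⊆ P ∨ J ∪ Y ⊆ P := by
    simp only [Set.union_subset_iff, mul_subset_coe_ideal_iff hP, and_or_left]
  simp only [Set.mem_inter_iff, mem_erad_iff, ← forall_and]
  refine forall₃_congr fun P hP _ ↦ ?_
  rw [union_mul_subset_iff hP, or_imp]

end

/-- If `b₁ * b₂ ∈ J` and `a ∈ Erad (J ∪ {b₁}) ∩ Erad (J ∪ {b₂})`, then `a ∈ Erad J`. -/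
theorem stmt6 {R : Type*} [CommRing R] (E : R → R)
    (hE0 : E 0 = 1) (hEadd : ∀ x y : R, E (x + y) = E x * E y)
    (J : Set R) (a b₁ b₂ : R) (hb : b₁ * b₂ ∈ J)
    (ha : a ∈ Erad E (J ∪ {b₁}) ∩ Erad E (J ∪ {b₂})) :
    a ∈ Erad E J := by
  rwa [← stmt6_general, Set.singleton_mul_singleton, Set.union_singleton,
    Set.insert_eq_of_mem hb] at ha
end

section
/- For each positive integer n, let V_n = { z ∈ ℂ : exp(z / n!) = 1 }. Then V_n = { 2·π·i·n!·k : k ∈ ℤ } for every n ≥ 1, and V_{n+1} ⊊ V_n for every n ≥ 1; in particular, (V_n)_{n ≥ 1} is a strictly decreasing infinite chain of subsets of ℂ, so ℂ with the exponential Zariski topology is not a Noetherian topological space. -/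
open Complex

/-!
The solutions of `exp (z / a) = 1` form the lattice `2πia ℤ`, so inclusion between two such
solution sets is divisibility of the scales in the reverse order, and `n!` strictly divides
`(n + 1)!` for `n ≥ 1`.
-/

theorem exp_div_eq_one_iff {a : ℂ} (ha : a ≠ 0) (z : ℂ) :
    exp (z / a) = 1 ↔ ∃ k : ℤ, z = 2 * (Real.pi : ℂ) * I * a * k := by
  rw [exp_eq_one_iff]
  refine exists_congr fun k => ?_
  rw [div_eq_iff ha, show (k : ℂ) * (2 * Real.pi * I) * a = 2 * Real.pi * I * a * k by ring]

theorem setOf_exp_div_eq_one_subset_iff {a b : ℂ} (ha : a ≠ 0) (hb : b ≠ 0) :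
    {z : ℂ | exp (z / b) = 1} ⊆ {z : ℂ | exp (z / a) = 1} ↔ ∃ k : ℤ, b = k * a := by
  constructor
  · intro hsub
    have hgen : exp (2 * Real.pi * I * b / b) = 1 := by
      rw [mul_div_cancel_right₀ _ hb, exp_two_pi_mul_I]
    obtain ⟨k, hk⟩ := (exp_div_eq_one_iff ha _).mp (hsub hgen)
    refine ⟨k, mul_left_cancel₀ two_pi_I_ne_zero ?_⟩
    rw [hk, mul_assoc, mul_comm a]
  · rintro ⟨k, rfl⟩ z (hz : exp (z / (k * a)) = 1)
    have hk : (k : ℂ) ≠ 0 := left_ne_zero_of_mul hb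
    calc exp (z / a) = exp (k * (z / (k * a))) := by rw [← mul_div_assoc, mul_div_mul_left _ _ hk]
      _ = exp (z / (k * a)) ^ k := exp_int_mul _ k
      _ = 1 := by rw [hz, one_zpow]

theorem setOf_exp_div_natCast_eq_one_subset_iff_dvd {m n : ℕ} (hm : m ≠ 0) (hn : n ≠ 0) :
    {z : ℂ | exp (z / n) = 1} ⊆ {z : ℂ | exp (z / m) = 1} ↔ m ∣ n := by
  rw [setOf_exp_div_eq_one_subset_iff (Nat.cast_ne_zero.mpr hm) (Nat.cast_ne_zero.mpr hn),
    ← Int.natCast_dvd_natCast, dvd_iff_exists_eq_mul_left]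
  exact exists_congr fun k => by norm_cast

theorem setOf_exp_div_natCast_eq_one_ssubset_iff_dvd_and_not_dvd {m n : ℕ} (hm : m ≠ 0)
    (hn : n ≠ 0) :
    {z : ℂ | exp (z / n) = 1} ⊂ {z : ℂ | exp (z / m) = 1} ↔ m ∣ n ∧ ¬ n ∣ m := by
  rw [ssubset_iff_subset_not_subset, setOf_exp_div_natCast_eq_one_subset_iff_dvd hm hn,
    setOf_exp_div_natCast_eq_one_subset_iff_dvd hn hm]

/-- For `n ≥ 1`, the zero set `V n = {z ∈ ℂ : exp (z / n!) = 1}` equals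
`{2 π i n! k : k ∈ ℤ}`, and the chain `(V n)` is strictly decreasing:
`V (n+1) ⊊ V n` for all `n ≥ 1`. -/
theorem stmt9 :
    (∀ n : ℕ, 1 ≤ n →
      {z : ℂ | Complex.exp (z / (n.factorial : ℂ)) = 1} =
        {z : ℂ | ∃ k : ℤ, z = 2 * (Real.pi : ℂ) * Complex.I * (n.factorial : ℂ) * (k : ℂ)}) ∧
    (∀ n : ℕ, 1 ≤ n →
      {z : ℂ | Complex.exp (z / ((n + 1).factorial : ℂ)) = 1} ⊂
        {z : ℂ | Complex.exp (z / (n.factorial : ℂ)) = 1}) := by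
  refine ⟨fun n _ => Set.ext (exp_div_eq_one_iff (Nat.cast_ne_zero.mpr n.factorial_ne_zero)),
    fun n hn => ?_⟩
  have hlt : n.factorial < (n + 1).factorial := Nat.factorial_lt_of_lt hn n.lt_succ_self
  have hdvd : n.factorial ∣ (n + 1).factorial := Nat.factorial_dvd_factorial n.le_succ
  have hndvd : ¬ (n + 1).factorial ∣ n.factorial := Nat.not_dvd_of_pos_of_lt n.factorial_pos hlt
  exact (setOf_exp_div_natCast_eq_one_ssubset_iff_dvd_and_not_dvd n.factorial_ne_zero
    (n + 1).factorial_ne_zero).mpr ⟨hdvd, hndvd⟩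
end
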